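/- arXiv:math/0504077 — 10 statements merged into one kernel-verified Lean document; each statement's English description precedes it below -/
import Mathlib

section
/- Let t ≥ 2. Let A' be the (t−1)×(t+c−2) matrix obtained from A by deleting its last row and last column, and let B be the t×(t+c−2) matrix obtained from A by deleting its last column. Then I(A) = I(B) + x_c^{u_{t+c−1,t}}·I(A') as ideals of R, where x_c^{u_{t+c−1,t}}·I(A') denotes the ideal generated by the products of x_c^{u_{t+c−1,t}} with the elements of I(A'). -/
open MvPolynomial Matrix

/-- The ideal generated by the maximal (`p × p`) minors of a `p × q` matrix
(determinants of the square submatrices obtained by choosing `p` of the `q` columns). -/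
noncomputable def maximalMinors {S : Type*} [CommRing S] {p q : ℕ}
    (M : Matrix (Fin p) (Fin q) S) : Ideal S :=
  Ideal.span {d : S | ∃ g : Fin p ↪ Fin q, d = (M.submatrix id g).det}

theorem aux_minors {S : Type*} [CommRing S] {p q p' q' : ℕ} (hp : p' + 1 = p) (hq : q' + 1 = q)
    (M : Matrix (Fin p) (Fin q) S) (hp' : p' ≤ p) (hq' : q' ≤ q) (a : S)
    (ha : M ⟨p', by omega⟩ ⟨q', by omega⟩ = a)
    (h0 : ∀ i : Fin p, i.1 < p' → M i ⟨q', by omega⟩ = 0) :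
    maximalMinors M = maximalMinors (M.submatrix id (Fin.castLE hq')) +
      Ideal.span {a} * maximalMinors (M.submatrix (Fin.castLE hp') (Fin.castLE hq')) := by
  subst hp hq
  have key : ∀ (g : Fin (p' + 1) → Fin (q' + 1)) (r : Fin (p' + 1)), g r = Fin.last q' →
      (M.submatrix id g).det = (-1) ^ (p' + r.1) *
        (a * (M.submatrix Fin.castSucc (fun x => g (r.succAbove x))).det) := by
    intro g r hr
    rw [Matrix.det_succ_column _ r, Finset.sum_eq_single (Fin.last p')]
    · have h1 : M (Fin.last p') (Fin.last q') = a := ha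
      simp only [submatrix_apply, id, hr, h1, submatrix_submatrix, Fin.val_last, mul_assoc]
      congr 4
      ext i j
      simp [Fin.succAbove_last]
    · intro b _ hb
      have h2 : M b (Fin.last q') = 0 := h0 b (by
        have := Fin.val_lt_last hb
        simpa using this)
      simp [hr, h2]
    · simp
  apply le_antisymm
  · refine Ideal.span_le.2 ?_
    rintro d ⟨g, rfl⟩
    by_cases h : ∃ r, g r = Fin.last q'
    · obtain ⟨r, hr⟩ := h
      rw [key g r hr]
      refine Ideal.mem_sup_right (Ideal.mul_mem_left _ _ (Ideal.mul_mem_mul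
        (Ideal.mem_span_singleton_self a) (Ideal.subset_span ?_)))
      have hne : ∀ x, g (r.succAbove x) ≠ Fin.last q' := fun x hx =>
        Fin.succAbove_ne r x (g.injective (hx.trans hr.symm))
      refine ⟨⟨fun x => (g (r.succAbove x)).castPred (hne x), fun x y hxy => ?_⟩, ?_⟩
      · have := congrArg Fin.castSucc hxy
        simpa using this
      · congr 1
    · push Not at h
      refine Ideal.mem_sup_left (Ideal.subset_span ?_)
      refine ⟨⟨fun x => (g x).castPred (h x), fun x y hxy => ?_⟩, ?_⟩
      · have := congrArg Fin.castSucc hxy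
        simpa using this
      · congr 1
  · refine sup_le (Ideal.span_le.2 ?_) ?_
    · rintro d ⟨g, rfl⟩
      exact Ideal.subset_span ⟨g.trans (Fin.castLEEmb hq'), rfl⟩
    · rw [maximalMinors, Ideal.span_mul_span', Ideal.span_le]
      rintro _ ⟨_, rfl, _, ⟨g, rfl⟩, rfl⟩
      let f : Fin (p' + 1) → Fin (q' + 1) :=
        Fin.snoc (α := fun _ => Fin (q' + 1)) (fun x => (g x).castSucc) (Fin.last q')
      have hf : Function.Injective f := by
        intro x y
        induction x using Fin.lastCases <;> induction y using Fin.lastCases <;>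
          simp [f, Fin.castSucc_ne_last, (Fin.castSucc_ne_last _).symm]
      have h3 := key f (Fin.last p') (by simp [f])
      have h4 : (M.submatrix Fin.castSucc (fun x => f ((Fin.last p').succAbove x))) =
          (M.submatrix (Fin.castLE hp') (Fin.castLE hq')).submatrix id g := by
        ext i j
        simp [f, Fin.succAbove_last]
        rfl
      rw [h4, Fin.val_last, Even.neg_one_pow ⟨p', rfl⟩, one_mul] at h3
      exact Ideal.subset_span ⟨⟨f, hf⟩, h3.symm⟩

/-- Let `t ≥ 2`.  Deleting the last row and column of `A` gives `A'`, deleting the last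
column gives `B`; then `I(A) = I(B) + x_c^{u_{t+c-1,t}} · I(A')`. -/
theorem stmt_0 {k : Type*} [Field k] (c t : ℕ) (hc : 1 ≤ c) (ht : 2 ≤ t)
    (u : Fin (t + c - 1) → Fin t → ℕ)
    (hupos : ∀ j i, 0 < u j i)
    (hurow : ∀ (j j' : Fin (t + c - 1)) (i : Fin t), j ≤ j' → u j i ≤ u j' i)
    (hucol : ∀ (j : Fin (t + c - 1)) (i i' : Fin t), i ≤ i' → u j i ≤ u j i')
    (A : Matrix (Fin t) (Fin (t + c - 1)) (MvPolynomial (Fin c) k))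
    (hA : ∀ i j, A i j =
      if h : i.1 ≤ j.1 ∧ j.1 < i.1 + c
      then X (⟨j.1 - i.1, by omega⟩ : Fin c) ^ u j i else 0)
    (A' : Matrix (Fin (t - 1)) (Fin (t + c - 2)) (MvPolynomial (Fin c) k))
    (hA' : A' = A.submatrix (Fin.castLE (show t - 1 ≤ t by omega))
      (Fin.castLE (show t + c - 2 ≤ t + c - 1 by omega)))
    (B : Matrix (Fin t) (Fin (t + c - 2)) (MvPolynomial (Fin c) k))
    (hB : B = A.submatrix id (Fin.castLE (show t + c - 2 ≤ t + c - 1 by omega))) :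
    maximalMinors A =
      maximalMinors B +
        Ideal.span {X (⟨c - 1, by omega⟩ : Fin c) ^
            u (⟨t + c - 2, by omega⟩ : Fin (t + c - 1)) (⟨t - 1, by omega⟩ : Fin t)} *
          maximalMinors A' := by
  subst hA' hB
  refine aux_minors (p' := t - 1) (q' := t + c - 2) (by omega) (by omega) A _ _ _ ?_ ?_
  · rw [hA, dif_pos (by constructor <;> simp <;> omega)]
    congr 3
    simp
    omega
  · intro i hi
    rw [hA, dif_neg]
    simp
    omega
end

section
/- Let t ≥ 2. Let A'' be the (t−1)×(t+c−2) matrix obtained from A by deleting its first row and first column, and let C be the t×(t+c−2) matrix obtained from A by deleting its first column. Then I(A) = I(C) + x_1^{u_{1,1}}·I(A'') as ideals of R, where x_1^{u_{1,1}}·I(A'') denotes the ideal generated by the products of x_1^{u_{1,1}} with the elements of I(A''). -/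
open MvPolynomial Matrix

theorem maxMinors_aux {S : Type*} [CommRing S] {n m : ℕ}
    (A : Matrix (Fin (n + 1)) (Fin (m + 1)) S) (h0 : ∀ i : Fin n, A i.succ 0 = 0) :
    maximalMinors A = maximalMinors (A.submatrix id Fin.succ) +
      Ideal.span {A 0 0} * maximalMinors (A.submatrix Fin.succ Fin.succ) := by
  apply le_antisymm
  · refine Ideal.span_le.2 ?_
    rintro _ ⟨g, rfl⟩
    by_cases h : ∃ i0, g i0 = 0
    · obtain ⟨i0, hi0⟩ := h
      have hne : ∀ j, g (i0.succAbove j) ≠ 0 := fun j hj =>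
        Fin.succAbove_ne i0 j (g.injective (hj.trans hi0.symm))
      refine Ideal.mem_sup_right ?_
      rw [Matrix.det_succ_column _ i0, Fin.sum_univ_succ]
      simp only [Matrix.submatrix_apply, id, hi0, h0, mul_zero, zero_mul, Finset.sum_const_zero,
        add_zero]
      rw [mul_assoc]
      refine Ideal.mul_mem_left _ _ (Ideal.mul_mem_mul (Ideal.mem_span_singleton_self _)
        (Ideal.subset_span ⟨⟨fun j => (g (i0.succAbove j)).pred (hne j), ?_⟩, ?_⟩))
      · intro a b hab
        exact Fin.succAbove_right_injective (g.injective (Fin.pred_inj.1 hab))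
      · congr 1
        ext a b
        simp only [Matrix.submatrix_apply, id, Fin.zero_succAbove]
        exact congrArg _ (Fin.succ_pred _ (hne b)).symm
    · push Not at h
      refine Ideal.mem_sup_left (Ideal.subset_span ⟨⟨fun j => (g j).pred (h j), ?_⟩, ?_⟩)
      · intro a b hab
        exact g.injective (Fin.pred_inj.1 hab)
      · congr 1
        ext a b
        simp only [Matrix.submatrix_apply, id, Fin.zero_succAbove]
        exact congrArg _ (Fin.succ_pred _ (h b)).symm
  · refine sup_le (Ideal.span_le.2 ?_) ?_
    · rintro _ ⟨g, rfl⟩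
      exact Ideal.subset_span ⟨g.trans (Fin.succEmb m), rfl⟩
    · unfold maximalMinors
      rw [Ideal.span_mul_span', Ideal.span_le]
      rintro _ ⟨x, hx, _, ⟨g, rfl⟩, rfl⟩
      rw [Set.mem_singleton_iff] at hx
      subst hx
      refine Ideal.subset_span ⟨⟨Fin.cons 0 (fun j => (g j).succ), ?_⟩, ?_⟩
      · rw [Fin.cons_injective_iff]
        refine ⟨?_, fun a b hab => g.injective (Fin.succ_injective _ hab)⟩
        rintro ⟨j, hj⟩
        exact Fin.succ_ne_zero _ hj
      · rw [Matrix.det_succ_column_zero, Fin.sum_univ_succ]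
        simp only [Matrix.submatrix_apply, id, Function.Embedding.coeFn_mk, Fin.cons_zero, h0,
          mul_zero, zero_mul, Finset.sum_const_zero, add_zero, Fin.val_zero, pow_zero, one_mul]
        congr 1

theorem maxMinors_aux' {S : Type*} [CommRing S] {p q n m : ℕ} (hp : p = n + 1) (hq : q = m + 1)
    (A : Matrix (Fin p) (Fin q) S)
    (h0 : ∀ i : Fin p, 0 < i.1 → A i ⟨0, by omega⟩ = 0) :
    maximalMinors A =
      maximalMinors (A.submatrix id
        (fun j : Fin m => (⟨j.1 + 1, by have := j.isLt; omega⟩ : Fin q))) +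
      Ideal.span {A ⟨0, by omega⟩ ⟨0, by omega⟩} * maximalMinors (A.submatrix
        (fun i : Fin n => (⟨i.1 + 1, by have := i.isLt; omega⟩ : Fin p))
        (fun j : Fin m => (⟨j.1 + 1, by have := j.isLt; omega⟩ : Fin q))) := by
  subst hp hq
  exact maxMinors_aux A (fun i => h0 i.succ (Nat.succ_pos _))

/-- Let `t ≥ 2`.  Deleting the first row and column of `A` gives `A''`, deleting the first
column gives `C`; then `I(A) = I(C) + x_1^{u_{1,1}} · I(A'')`. -/
theorem stmt_1 {k : Type*} [Field k] (c t : ℕ) (hc : 1 ≤ c) (ht : 2 ≤ t)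
    (u : Fin (t + c - 1) → Fin t → ℕ)
    (hupos : ∀ j i, 0 < u j i)
    (hurow : ∀ (j j' : Fin (t + c - 1)) (i : Fin t), j ≤ j' → u j i ≤ u j' i)
    (hucol : ∀ (j : Fin (t + c - 1)) (i i' : Fin t), i ≤ i' → u j i ≤ u j i')
    (A : Matrix (Fin t) (Fin (t + c - 1)) (MvPolynomial (Fin c) k))
    (hA : ∀ i j, A i j =
      if h : i.1 ≤ j.1 ∧ j.1 < i.1 + c
      then X (⟨j.1 - i.1, by omega⟩ : Fin c) ^ u j i else 0)
    (A'' : Matrix (Fin (t - 1)) (Fin (t + c - 2)) (MvPolynomial (Fin c) k))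
    (hA'' : A'' = A.submatrix
      (fun i : Fin (t - 1) => (⟨i.1 + 1, by have := i.isLt; omega⟩ : Fin t))
      (fun j : Fin (t + c - 2) => (⟨j.1 + 1, by have := j.isLt; omega⟩ : Fin (t + c - 1))))
    (C : Matrix (Fin t) (Fin (t + c - 2)) (MvPolynomial (Fin c) k))
    (hC : C = A.submatrix id
      (fun j : Fin (t + c - 2) => (⟨j.1 + 1, by have := j.isLt; omega⟩ : Fin (t + c - 1)))) :
    maximalMinors A =
      maximalMinors C +
        Ideal.span {X (⟨0, by omega⟩ : Fin c) ^
            u (⟨0, by omega⟩ : Fin (t + c - 1)) (⟨0, by omega⟩ : Fin t)} *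
          maximalMinors A'' := by
  subst hA'' hC
  rw [maxMinors_aux' (n := t - 1) (m := t + c - 2) (by omega) (by omega) A ?_]
  · rw [hA ⟨0, by omega⟩ ⟨0, by omega⟩, dif_pos ⟨le_rfl, by simp; omega⟩]
    rfl
  · intro i hi
    rw [hA, dif_neg]
    simp only [not_and]
    intro h
    omega
end

section
/- Let t ≥ 2, let A' be the (t−1)×(t+c−2) matrix obtained from A by deleting its last row and last column, let B be the t×(t+c−2) matrix obtained from A by deleting its last column, and set I = I(A), I' = I(A'), J = I(B), and a = u_{t+c−1,t}. Then J ⊆ I', and the sequence of R-modules 0 → J → I' × J → I → 0 is exact, where the first map sends f to (f, −x_c^a·f) and the second map sends (g,h) to x_c^a·g + h; that is, the first map is injective, the second map is well defined (its values lie in I) and surjective onto I, and the kernel of the second map equals the image of the first. -/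
open MvPolynomial Matrix

namespace EN
universe u

/-- The exterior algebra of a free module of rank `n`, in coordinates. -/
abbrev Ext (S : Type u) (n : ℕ) : Type u := (Fin n → Bool) → S

section basic
variable {S : Type u} [CommRing S]

noncomputable def p1 (n : ℕ) : Ext S (n+1) →ₗ[S] Ext S n :=
  LinearMap.funLeft S S (fun f => (Fin.snoc f false : Fin (n+1) → Bool))
noncomputable def p2 (n : ℕ) : Ext S (n+1) →ₗ[S] Ext S n :=
  LinearMap.funLeft S S (fun f => (Fin.snoc f true : Fin (n+1) → Bool))
noncomputable def inl (n : ℕ) : Ext S n →ₗ[S] Ext S (n+1) where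
  toFun a := fun f => if f (Fin.last n) then 0 else a (fun i => f (Fin.castSucc i))
  map_add' a b := by ext f; by_cases h : f (Fin.last n) <;> simp [h]
  map_smul' a b := by ext f; by_cases h : f (Fin.last n) <;> simp [h]
noncomputable def inr (n : ℕ) : Ext S n →ₗ[S] Ext S (n+1) where
  toFun a := fun f => if f (Fin.last n) then a (fun i => f (Fin.castSucc i)) else 0
  map_add' a b := by ext f; by_cases h : f (Fin.last n) <;> simp [h]
  map_smul' a b := by ext f; by_cases h : f (Fin.last n) <;> simp [h]

@[simp] lemma p1_inl (n : ℕ) (a : Ext S n) : p1 n (inl n a) = a := by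
  ext f; simp [p1, inl, LinearMap.funLeft_apply]
@[simp] lemma p2_inl (n : ℕ) (a : Ext S n) : p2 n (inl n a) = 0 := by
  ext f; simp [p2, inl, LinearMap.funLeft_apply]
@[simp] lemma p1_inr (n : ℕ) (a : Ext S n) : p1 n (inr n a) = 0 := by
  ext f; simp [p1, inr, LinearMap.funLeft_apply]
@[simp] lemma p2_inr (n : ℕ) (a : Ext S n) : p2 n (inr n a) = a := by
  ext f; simp [p2, inr, LinearMap.funLeft_apply]
lemma ext_pair {n : ℕ} {w w' : Ext S (n+1)} (h1 : p1 n w = p1 n w') (h2 : p2 n w = p2 n w') :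
    w = w' := by
  ext f
  have e : f = Fin.snoc (fun i => f (Fin.castSucc i)) (f (Fin.last n)) := (Fin.snoc_init_self f).symm
  cases h : f (Fin.last n)
  · have := congrFun h1 (fun i => f (Fin.castSucc i))
    simp only [p1, LinearMap.funLeft_apply] at this
    rwa [← h, ← e] at this
  · have := congrFun h2 (fun i => f (Fin.castSucc i))
    simp only [p2, LinearMap.funLeft_apply] at this
    rwa [← h, ← e] at this

/-- contraction with a functional -/
noncomputable def con (r : ℕ → S) : ∀ n, Ext S n →ₗ[S] Ext S n
  | 0 => 0
  | n+1 => inl n ∘ₗ (con r n ∘ₗ p1 n + r n • p2 n) - inr n ∘ₗ con r n ∘ₗ p2 n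

@[simp] lemma p1_con (r : ℕ → S) (n : ℕ) (w : Ext S (n+1)) :
    p1 n (con r (n+1) w) = con r n (p1 n w) + r n • p2 n w := by
  simp [con]
@[simp] lemma p2_con (r : ℕ → S) (n : ℕ) (w : Ext S (n+1)) :
    p2 n (con r (n+1) w) = - con r n (p2 n w) := by
  simp [con]

lemma con_anti (r r' : ℕ → S) (n : ℕ) (w : Ext S n) :
    con r n (con r' n w) = - con r' n (con r n w) := by
  induction n with
  | zero => simp [con]
  | succ n ih =>
    apply ext_pair
    · simp only [p1_con, p2_con, map_add, map_neg, map_smul, ih (p1 n w)]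
      simp only [smul_neg]
      module
    · simp only [p2_con, map_neg, ih (p2 n w)]

lemma con_sq (r : ℕ → S) (n : ℕ) (w : Ext S n) : con r n (con r n w) = 0 := by
  induction n with
  | zero => simp [con]
  | succ n ih =>
    apply ext_pair
    · simp [ih]
    · simp [ih]

/-- iterated contraction -/
noncomputable def Dc (M : ℕ → ℕ → S) (n : ℕ) : ℕ → (Ext S n →ₗ[S] Ext S n)
  | 0 => LinearMap.id
  | t+1 => Dc M n t ∘ₗ con (M t) n

noncomputable def Im (M : ℕ → ℕ → S) (n : ℕ) : ℕ → Submodule S (Ext S n)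
  | 0 => ⊥
  | t+1 => Im M n t ⊔ LinearMap.range (con (M t) n)

/-- elements of degree less than `t` -/
noncomputable def Dg (S : Type u) [CommRing S] : ∀ n, ℕ → Submodule S (Ext S n)
  | _, 0 => ⊥
  | 0, _+1 => ⊤
  | n+1, t+1 => (Dg S n (t+1)).comap (p1 n) ⊓ (Dg S n t).comap (p2 n)

lemma Dg_zero (n : ℕ) : Dg S n 0 = ⊥ := by cases n <;> simp [Dg]
lemma mem_Dg_succ {n t : ℕ} {w : Ext S (n+1)} :
    w ∈ Dg S (n+1) (t+1) ↔ p1 n w ∈ Dg S n (t+1) ∧ p2 n w ∈ Dg S n t := by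
  simp [Dg]

lemma Dg_top (n : ℕ) : ∀ t, n < t → Dg S n t = ⊤ := by
  induction n with
  | zero => intro t ht; obtain ⟨s, rfl⟩ : ∃ s, t = s+1 := ⟨t-1, by omega⟩; simp [Dg]
  | succ n ih =>
    intro t ht; obtain ⟨s, rfl⟩ : ∃ s, t = s+1 := ⟨t-1, by omega⟩
    simp [Dg, ih (s+1) (by omega), ih s (by omega)]

lemma con_Dg (r : ℕ → S) (n : ℕ) : ∀ t w, w ∈ Dg S n (t+1) → con r n w ∈ Dg S n t := by
  induction n with
  | zero => intro t w _; simp [con]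
  | succ n ih =>
    intro t w hw
    rw [mem_Dg_succ] at hw
    obtain ⟨h1, h2⟩ := hw
    cases t with
    | zero =>
      have h3 := ih 0 _ h1
      rw [Dg_zero, Submodule.mem_bot] at h2 h3 ⊢
      apply ext_pair <;> simp [h2, h3]
    | succ t =>
      rw [mem_Dg_succ]
      simp only [p1_con, p2_con]
      exact ⟨add_mem (ih _ _ h1) (Submodule.smul_mem _ _ h2), neg_mem (ih _ _ h2)⟩

lemma Dc_Dg (M : ℕ → ℕ → S) (n t : ℕ) : ∀ w ∈ Dg S n t, Dc M n t w = 0 := by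
  induction t with
  | zero => intro w hw; rw [Dg_zero, Submodule.mem_bot] at hw; simp [hw]
  | succ t ih => intro w hw; exact ih _ (con_Dg _ _ _ _ hw)

lemma con_Im (M : ℕ → ℕ → S) (r : ℕ → S) (n t : ℕ) : ∀ w ∈ Im M n t, con r n w ∈ Im M n t := by
  induction t with
  | zero => intro w hw; simp only [Im, Submodule.mem_bot] at hw ⊢; simp [hw]
  | succ t ih =>
    intro w hw
    obtain ⟨a, ha, b, ⟨b, rfl⟩, rfl⟩ := Submodule.mem_sup.1 hw
    rw [map_add]
    refine Submodule.add_mem_sup (ih _ ha) ?_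
    rw [con_anti]
    exact neg_mem ⟨_, rfl⟩

lemma Dc_Im (M : ℕ → ℕ → S) (n t : ℕ) : ∀ w ∈ Im M n t, Dc M n t w = 0 := by
  induction t with
  | zero => intro w hw; simp only [Im, Submodule.mem_bot] at hw; simp [hw]
  | succ t ih =>
    intro w hw
    obtain ⟨a, ha, b, ⟨b, rfl⟩, rfl⟩ := Submodule.mem_sup.1 hw
    simp only [Dc, LinearMap.comp_apply, map_add, con_sq, map_zero, add_zero]
    exact ih _ (con_Im _ _ _ _ _ ha)

noncomputable def K (M : ℕ → ℕ → S) (n t : ℕ) : Submodule S (Ext S n) := Im M n t ⊔ Dg S n t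

lemma Dc_K (M : ℕ → ℕ → S) (n t : ℕ) (w) (hw : w ∈ K M n t) : Dc M n t w = 0 := by
  obtain ⟨a, ha, b, hb, rfl⟩ := Submodule.mem_sup.1 hw
  rw [map_add, Dc_Im _ _ _ _ ha, Dc_Dg _ _ _ _ hb, add_zero]

def P (M : ℕ → ℕ → S) (n t : ℕ) : Prop := ∀ w, Dc M n t w = 0 → w ∈ K M n t

/-- behaviour for matrices whose last column vanishes -/
lemma p1_Dc (M : ℕ → ℕ → S) (n t : ℕ) (h : ∀ i < t, M i n = 0) (w : Ext S (n+1)) :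
    p1 n (Dc M (n+1) t w) = Dc M n t (p1 n w) := by
  induction t generalizing w with
  | zero => simp [Dc]
  | succ t ih =>
    simp only [Dc, LinearMap.comp_apply]
    rw [ih (fun i hi => h i (by omega)), p1_con, h t (by omega), zero_smul, add_zero]

lemma p1_Dc_succ (M : ℕ → ℕ → S) (n t : ℕ) (h : ∀ i < t, M i n = 0) (w : Ext S (n+1)) :
    p1 n (Dc M (n+1) (t+1) w) = Dc M n (t+1) (p1 n w) + M t n • Dc M n t (p2 n w) := by
  simp only [Dc, LinearMap.comp_apply]
  rw [p1_Dc _ _ _ h, p1_con, map_add, map_smul]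

lemma con_inl (r : ℕ → S) (n : ℕ) (w : Ext S n) : con r (n+1) (inl n w) = inl n (con r n w) := by
  apply ext_pair <;> simp

lemma inl_Im (M : ℕ → ℕ → S) (n t : ℕ) : ∀ w ∈ Im M n t, inl n w ∈ Im M (n+1) t := by
  induction t with
  | zero => intro w hw; simp only [Im, Submodule.mem_bot] at hw ⊢; simp [hw]
  | succ t ih =>
    intro w hw
    obtain ⟨a, ha, b, ⟨b, rfl⟩, rfl⟩ := Submodule.mem_sup.1 hw
    rw [map_add]
    refine Submodule.add_mem_sup (ih _ ha) ⟨inl n b, con_inl _ _ _⟩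

lemma inl_Dg (n t : ℕ) (w) (hw : w ∈ Dg S n t) : inl n w ∈ Dg S (n+1) t := by
  cases t with
  | zero => rw [Dg_zero, Submodule.mem_bot] at hw ⊢; simp [hw]
  | succ t => rw [mem_Dg_succ]; simpa using hw

lemma inl_K (M : ℕ → ℕ → S) (n t : ℕ) (w) (hw : w ∈ K M n t) : inl n w ∈ K M (n+1) t := by
  obtain ⟨a, ha, b, hb, rfl⟩ := Submodule.mem_sup.1 hw
  rw [map_add]
  exact Submodule.add_mem_sup (inl_Im _ _ _ _ ha) (inl_Dg _ _ _ hb)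

lemma inr_Im (M : ℕ → ℕ → S) (n t : ℕ) (h : ∀ i < t, M i n = 0) :
    ∀ w ∈ Im M n t, inr n w ∈ Im M (n+1) t := by
  induction t with
  | zero => intro w hw; simp only [Im, Submodule.mem_bot] at hw ⊢; simp [hw]
  | succ t ih =>
    intro w hw
    obtain ⟨a, ha, b, ⟨b, rfl⟩, rfl⟩ := Submodule.mem_sup.1 hw
    rw [map_add]
    refine Submodule.add_mem_sup (ih (fun i hi => h i (by omega)) _ ha) ⟨- inr n b, ?_⟩
    apply ext_pair <;> simp [h t]

lemma inr_K (M : ℕ → ℕ → S) (n t : ℕ) (h : ∀ i < t, M i n = 0) (w) (hw : w ∈ K M n t) :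
    inr n w ∈ K M (n+1) (t+1) := by
  obtain ⟨a, ha, b, hb, rfl⟩ := Submodule.mem_sup.1 hw
  rw [map_add]
  refine Submodule.add_mem_sup (Submodule.mem_sup_left (inr_Im _ _ _ h _ ha)) ?_
  rw [mem_Dg_succ]; simpa using hb

/-- the inductive step for the syzygies -/
lemma P_step (M : ℕ → ℕ → S) (n t : ℕ) (h : ∀ i < t, M i n = 0)
    (hA' : P M n t) (hB : P M n (t+1))
    (hN : ∀ v, (∃ f, M t n • v = Dc M n (t+1) f) → ∃ f, v = Dc M n (t+1) f) :
    P M (n+1) (t+1) := by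
  intro w hw
  have h1 := p1_Dc_succ M n t h w
  rw [hw, map_zero] at h1
  obtain ⟨f, hf⟩ := hN (Dc M n t (p2 n w)) ⟨- p1 n w, by
    rw [map_neg]; exact eq_neg_of_add_eq_zero_right h1.symm⟩
  have hb : p2 n w - con (M t) n f ∈ K M n t := by
    apply hA'
    rw [map_sub, hf]; simp [Dc]
  have ha : p1 n w + M t n • f ∈ K M n (t+1) := by
    apply hB
    rw [map_add, map_smul, ← hf]; exact h1.symm
  have e : w = inl n (p1 n w + M t n • f) + inr n (p2 n w - con (M t) n f)
      + con (M t) (n+1) (- inr n f) := by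
    apply ext_pair <;> simp
  rw [e]
  refine add_mem (add_mem (inl_K _ _ _ _ ha) (inr_K _ _ _ h _ hb)) ?_
  exact Submodule.mem_sup_left (Submodule.mem_sup_right ⟨_, rfl⟩)

lemma P_zero (M : ℕ → ℕ → S) (n : ℕ) : P M n 0 := by
  intro w hw
  have : w = 0 := hw
  rw [this]; exact zero_mem _

lemma P_big (M : ℕ → ℕ → S) (n t : ℕ) (h : n < t) : P M n t := by
  intro w hw
  rw [K, Dg_top _ _ h]; simp

end basic

section change
variable {S T : Type u} [CommRing S] [CommRing T] (φ : S →+* T)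

noncomputable def mp (n : ℕ) : Ext S n →+ Ext T n where
  toFun w := fun f => φ (w f)
  map_zero' := by ext; simp
  map_add' a b := by ext; simp

lemma mp_smul (n : ℕ) (s : S) (w : Ext S n) : mp φ n (s • w) = φ s • mp φ n w := by
  ext; simp [mp]
lemma mp_p1 (n : ℕ) (w : Ext S (n+1)) : mp φ n (p1 n w) = p1 n (mp φ (n+1) w) := rfl
lemma mp_p2 (n : ℕ) (w : Ext S (n+1)) : mp φ n (p2 n w) = p2 n (mp φ (n+1) w) := rfl

lemma mp_con (r : ℕ → S) (n : ℕ) (w : Ext S n) :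
    mp φ n (con r n w) = con (fun i => φ (r i)) n (mp φ n w) := by
  induction n with
  | zero => simp [con]
  | succ n ih =>
    apply ext_pair
    · rw [← mp_p1]; simp [mp_smul, ih, mp_p1, mp_p2]
    · rw [← mp_p2]; simp [ih, mp_p2]

lemma mp_Dc (M : ℕ → ℕ → S) (n t : ℕ) (w : Ext S n) :
    mp φ n (Dc M n t w) = Dc (fun i j => φ (M i j)) n t (mp φ n w) := by
  induction t generalizing w with
  | zero => simp [Dc]
  | succ t ih => simp only [Dc, LinearMap.comp_apply]; rw [ih, mp_con]

lemma mp_surj (hφ : Function.Surjective φ) (n : ℕ) (w : Ext T n) : ∃ v, mp φ n v = w := by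
  choose g hg using hφ
  exact ⟨fun f => g (w f), by ext f; simp [mp, hg]⟩

lemma mp_ker (x : S) (hk : ∀ y, φ y = 0 → ∃ z, y = x * z) (n : ℕ) (w : Ext S n)
    (hw : mp φ n w = 0) : ∃ v, w = x • v := by
  have : ∀ f, ∃ z, w f = x * z := fun f => hk _ (congrFun hw f)
  choose v hv using this
  exact ⟨v, by ext f; simp [hv]⟩

lemma Im_lift (hφ : Function.Surjective φ) (M : ℕ → ℕ → S) (n t : ℕ) :
    ∀ w ∈ Im (fun i j => φ (M i j)) n t, ∃ v ∈ Im M n t, mp φ n v = w := by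
  induction t with
  | zero => intro w hw; simp only [Im, Submodule.mem_bot] at hw; exact ⟨0, zero_mem _, by simp [hw]⟩
  | succ t ih =>
    intro w hw
    obtain ⟨a, ha, b, ⟨b, rfl⟩, rfl⟩ := Submodule.mem_sup.1 hw
    obtain ⟨a', ha', rfl⟩ := ih _ ha
    obtain ⟨b', rfl⟩ := mp_surj φ hφ n b
    exact ⟨a' + con (M t) n b', Submodule.add_mem_sup ha' ⟨_, rfl⟩, by rw [map_add, mp_con]⟩

lemma Dg_lift (hφ : Function.Surjective φ) (n : ℕ) :
    ∀ t, ∀ w ∈ Dg T n t, ∃ v ∈ Dg S n t, mp φ n v = w := by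
  induction n with
  | zero =>
    intro t w hw
    cases t with
    | zero => rw [Dg_zero, Submodule.mem_bot] at hw; exact ⟨0, zero_mem _, by simp [hw]⟩
    | succ t => obtain ⟨v, hv⟩ := mp_surj φ hφ 0 w; exact ⟨v, by simp [Dg], hv⟩
  | succ n ih =>
    intro t w hw
    cases t with
    | zero => rw [Dg_zero, Submodule.mem_bot] at hw; exact ⟨0, zero_mem _, by simp [hw]⟩
    | succ t =>
      rw [mem_Dg_succ] at hw
      obtain ⟨a, ha, ha'⟩ := ih _ _ hw.1
      obtain ⟨b, hb, hb'⟩ := ih _ _ hw.2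
      refine ⟨inl n a + inr n b, ?_, ?_⟩
      · rw [mem_Dg_succ]; simp [ha, hb]
      · apply ext_pair
        · rw [← mp_p1]; simp [ha']
        · rw [← mp_p2]; simp [hb']

lemma K_lift (hφ : Function.Surjective φ) (M : ℕ → ℕ → S) (n t : ℕ) (w)
    (hw : w ∈ K (fun i j => φ (M i j)) n t) : ∃ v ∈ K M n t, mp φ n v = w := by
  obtain ⟨a, ha, b, hb, rfl⟩ := Submodule.mem_sup.1 hw
  obtain ⟨a', ha', rfl⟩ := Im_lift φ hφ _ _ _ _ ha
  obtain ⟨b', hb', rfl⟩ := Dg_lift φ hφ _ _ _ hb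
  exact ⟨a' + b', Submodule.add_mem_sup ha' hb', map_add _ _ _⟩

lemma lift_syz (hφ : Function.Surjective φ) (x : S) (hk : ∀ y, φ y = 0 → ∃ z, y = x * z)
    (M : ℕ → ℕ → S) (n t : ℕ) (hP : P (fun i j => φ (M i j)) n t) (f : Ext S n)
    (hf : mp φ n (Dc M n t f) = 0) : ∃ a ∈ K M n t, ∃ f', f = a + x • f' := by
  rw [mp_Dc] at hf
  obtain ⟨a, ha, hav⟩ := K_lift φ hφ _ _ _ _ (hP _ hf)
  obtain ⟨f', hf'⟩ := mp_ker φ x hk n (f - a) (by rw [map_sub, hav, sub_self])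
  exact ⟨a, ha, f', by rw [← hf']; abel⟩

lemma nzd_ext {x : S} (hx : ∀ y, x * y = 0 → y = 0) {n : ℕ} {v w : Ext S n} (h : x • v = x • w) :
    v = w := by
  ext f
  have := congrFun h f
  simp only [Pi.smul_apply, smul_eq_mul] at this
  exact sub_eq_zero.1 (hx _ (by rw [mul_sub, this, sub_self]))

lemma N_one (hφ : Function.Surjective φ) (x : S) (hk : ∀ y, φ y = 0 → ∃ z, y = x * z)
    (hφx : φ x = 0) (hx : ∀ y, x * y = 0 → y = 0)
    (M : ℕ → ℕ → S) (n t : ℕ) (hP : P (fun i j => φ (M i j)) n t) (v : Ext S n)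
    (h : ∃ f, x • v = Dc M n t f) : ∃ f, v = Dc M n t f := by
  obtain ⟨f, hf⟩ := h
  obtain ⟨a, ha, f', rfl⟩ := lift_syz φ hφ x hk M n t hP f (by rw [← hf, mp_smul, hφx, zero_smul])
  refine ⟨f', nzd_ext hx ?_⟩
  rw [hf, map_add, Dc_K _ _ _ _ ha, zero_add, map_smul]

lemma N_pow (hφ : Function.Surjective φ) (x : S) (hk : ∀ y, φ y = 0 → ∃ z, y = x * z)
    (hφx : φ x = 0) (hx : ∀ y, x * y = 0 → y = 0)
    (M : ℕ → ℕ → S) (n t : ℕ) (hP : P (fun i j => φ (M i j)) n t) (m : ℕ) (v : Ext S n)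
    (h : ∃ f, x ^ m • v = Dc M n t f) : ∃ f, v = Dc M n t f := by
  induction m with
  | zero => simpa using h
  | succ m ih =>
    apply ih
    apply N_one φ hφ x hk hφx hx M n t hP
    simpa [smul_smul, pow_succ'] using h

lemma P_lift [IsNoetherianRing S] (hφ : Function.Surjective φ) (x : S)
    (hk : ∀ y, φ y = 0 → ∃ z, y = x * z)
    (hx : ∀ y, x * y = 0 → y = 0) (hj : x ∈ Ideal.jacobson (⊥ : Ideal S))
    (M : ℕ → ℕ → S) (n t : ℕ) (hP : P (fun i j => φ (M i j)) n t) : P M n t := by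
  have key : LinearMap.ker (Dc M n t) ≤ K M n t := by
    apply Submodule.le_of_le_smul_of_le_jacobson_bot (I := Ideal.span {x})
      (IsNoetherian.noetherian _)
    · rw [Ideal.span_le]; simpa using hj
    · intro w hw
      rw [LinearMap.mem_ker] at hw
      obtain ⟨a, ha, f', rfl⟩ := lift_syz φ hφ x hk M n t hP w (by rw [hw, map_zero])
      refine Submodule.add_mem_sup ha (Submodule.smul_mem_smul (Ideal.mem_span_singleton_self x) ?_)
      rw [LinearMap.mem_ker]
      rw [map_add, Dc_K _ _ _ _ ha, zero_add, map_smul] at hw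
      exact nzd_ext hx (by rw [hw, smul_zero])
  exact fun w hw => key hw

end change

/-- Syzygies of maximal minors of band matrices over a tower of rings. -/
theorem P_main (T : ℕ → Type u) [∀ d, CommRing (T d)] [∀ d, IsNoetherianRing (T d)]
    (φ : ∀ d, T (d+1) →+* T d) (hφ : ∀ d, Function.Surjective (φ d))
    (x : ∀ d, ℕ → T d) (hx : ∀ d i, φ d (x (d+1) i) = x d i) (c : ℕ)
    (hx0 : ∀ d, φ d (x (d+1) d) = 0)
    (hk : ∀ d < c, ∀ y, φ d y = 0 → ∃ z, y = x (d+1) d * z)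
    (hn : ∀ d < c, ∀ y, x (d+1) d * y = 0 → y = 0)
    (hj : ∀ d < c, x (d+1) d ∈ Ideal.jacobson (⊥ : Ideal (T (d+1)))) (d : ℕ) (hd : d ≤ c) :
    ∀ (s : ℕ) (M : ℕ → ℕ → T d), (∀ i k, k < d → ∃ a, 0 < a ∧ M i (i+k) = x d k ^ a) →
      (∀ i j, i + d ≤ j → M i j = 0) → P M (s + d) (s + 1) := by
  induction d with
  | zero => intro s M _ _; exact P_big _ _ _ (by omega)
  | succ d ih =>
    have aux : ∀ s (M : ℕ → ℕ → T (d+1)),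
        (∀ i k, k < d+1 → ∃ a, 0 < a ∧ M i (i+k) = x (d+1) k ^ a) →
        (∀ i j, i + (d+1) ≤ j → M i j = 0) → 
        P (fun i j => φ d (M i j)) (s+d) (s+1) := by
      intro s M h1 h2
      apply ih (by omega)
      · intro i k hk
        obtain ⟨a, ha, e⟩ := h1 i k (by omega)
        exact ⟨a, ha, by rw [e, map_pow, hx]⟩
      · intro i j hij
        rcases hij.lt_or_eq with h | rfl
        · rw [h2 i j (by omega), map_zero]
        · obtain ⟨a, ha, e⟩ := h1 i d (by omega)
          rw [e, map_pow, hx0, zero_pow (by omega)]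
    intro s
    induction s with
    | zero =>
      intro M h1 h2
      obtain ⟨a, ha, e⟩ := h1 0 d (by omega)
      have hB := aux 0 M h1 h2
      apply P_step M (0+d) 0 (by intro i hi; omega) (P_zero _ _)
      · exact P_lift (φ d) (hφ d) _ (hk d (by omega)) (hn d (by omega)) (hj d (by omega)) _ _ _ hB
      · rw [e]
        exact N_pow (φ d) (hφ d) _ (hk d (by omega)) (hx0 d) (hn d (by omega)) _ _ _ hB a
    | succ s ihs =>
      intro M h1 h2
      obtain ⟨a, ha, e⟩ := h1 (s+1) d (by omega)
      have hB := aux (s+1) M h1 h2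
      have hA := ihs M h1 h2
      have e1 : s + (d+1) = s + 1 + d := by omega
      rw [e1] at hA
      apply P_step M (s+1+d) (s+1) (fun i hi => h2 _ _ (by omega)) hA
      · exact P_lift (φ d) (hφ d) _ (hk d (by omega)) (hn d (by omega)) (hj d (by omega)) _ _ _ hB
      · rw [e]
        exact N_pow (φ d) (hφ d) _ (hk d (by omega)) (hx0 d) (hn d (by omega)) _ _ _ hB a

end EN

namespace EN
universe u
section link
variable {S : Type u} [CommRing S]

noncomputable def eps (n : ℕ) : Ext S n →ₗ[S] S := LinearMap.proj (fun _ => false)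
noncomputable def one (S : Type u) [CommRing S] (n : ℕ) : Ext S n := Pi.single (fun _ => false) 1

lemma eps_one (n : ℕ) : eps n (one S n) = 1 := by simp [eps, one]
lemma snoc_false (n : ℕ) :
    (Fin.snoc (fun _ : Fin n => false) false : Fin (n+1) → Bool) = fun _ => false := by
  ext i; refine Fin.lastCases ?_ (fun j => ?_) i <;> simp
lemma eps_succ (n : ℕ) (w : Ext S (n+1)) : eps (n+1) w = eps n (p1 n w) := by
  simp [eps, p1, LinearMap.funLeft_apply, snoc_false]
lemma one_succ (n : ℕ) : one S (n+1) = inl n (one S n) := by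
  apply ext_pair
  · rw [p1_inl]
    ext f
    simp only [p1, one, LinearMap.funLeft_apply, Pi.single_apply, ← snoc_false]
    congr 1
    simp only [Fin.snoc_inj, and_true]
  · rw [p2_inl]
    ext f
    simp only [p2, one, LinearMap.funLeft_apply, Pi.single_apply, ← snoc_false]
    simp [Fin.snoc_inj]
lemma con_one (r : ℕ → S) (n : ℕ) : con r n (one S n) = 0 := by
  induction n with
  | zero => simp [con]
  | succ n ih => rw [one_succ, con_inl, ih, map_zero]

/-- wedge with the `j`-th basis vector -/
noncomputable def wd (j : ℕ) : ∀ n, Ext S n →ₗ[S] Ext S n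
  | 0 => 0
  | n+1 => if j = n then inr n ∘ₗ p1 n else inl n ∘ₗ wd j n ∘ₗ p1 n - inr n ∘ₗ wd j n ∘ₗ p2 n

lemma wd_self (n : ℕ) (w : Ext S (n+1)) : wd n (n+1) w = inr n (p1 n w) := by simp [wd]
lemma wd_ne (j n : ℕ) (h : j ≠ n) (w : Ext S (n+1)) :
    wd j (n+1) w = inl n (wd j n (p1 n w)) - inr n (wd j n (p2 n w)) := by simp [wd, h]

lemma con_wd (r : ℕ → S) (j n : ℕ) (h : j < n) (w : Ext S n) :
    con r n (wd j n w) = r j • w - wd j n (con r n w) := by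
  induction n with
  | zero => omega
  | succ n ih =>
    by_cases hj : j = n
    · subst hj
      rw [wd_self, wd_self]
      apply ext_pair <;> simp
    · rw [wd_ne _ _ hj, wd_ne _ _ hj]
      apply ext_pair
      · simp [ih (by omega)]; abel
      · simp [ih (by omega)]

lemma eps_wd (j n : ℕ) (w : Ext S n) : eps n (wd j n w) = 0 := by
  induction n with
  | zero => simp [wd]
  | succ n ih =>
    rw [eps_succ]
    by_cases hj : j = n
    · subst hj; rw [wd_self]; simp
    · rw [wd_ne _ _ hj]; simp [ih]

noncomputable def wg (n : ℕ) : ∀ (m : ℕ) (_ : Fin m → ℕ), Ext S n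
  | 0, _ => one S n
  | m+1, g => wd (g 0) n (wg n m (fun i => g i.succ))

lemma con_wg (r : ℕ → S) (n m : ℕ) : ∀ (g : Fin (m+1) → ℕ), (∀ j, g j < n) →
    con r n (wg n (m+1) g) =
      ∑ k : Fin (m+1), ((-1) ^ (k:ℕ) * r (g k)) • wg n m (fun j => g (k.succAbove j)) := by
  induction m with
  | zero =>
    intro g hg
    simp [wg, con_wd _ _ _ (hg 0), con_one]
  | succ m ih =>
    intro g hg
    rw [wg, con_wd _ _ _ (hg 0), ih _ (fun j => hg _), Fin.sum_univ_succ (n := m + 1), map_sum, sub_eq_add_neg,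
      ← Finset.sum_neg_distrib]
    congr 1
    · simp
    · apply Finset.sum_congr rfl
      intro k _
      rw [wg, map_smul]
      simp [pow_succ]

lemma Dc_wg (M : ℕ → ℕ → S) (n t : ℕ) : ∃ s : S, s * s = 1 ∧ ∀ g : Fin t → ℕ, (∀ j, g j < n) →
    Dc M n t (wg n t g) = (s * (Matrix.of fun i j : Fin t => M i (g j)).det) • one S n := by
  induction t with
  | zero => exact ⟨1, by simp, fun g _ => by simp [Dc, wg]⟩
  | succ t ih =>
    obtain ⟨s, hs, ih⟩ := ih
    refine ⟨(-1)^t * s, ?_, fun g hg => ?_⟩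
    · rw [mul_mul_mul_comm, hs, ← pow_add]; simp
    · simp only [Dc, LinearMap.comp_apply]
      rw [con_wg _ _ _ _ hg, map_sum, Matrix.det_succ_row _ (Fin.last t), Finset.mul_sum,
        Finset.sum_smul]
      apply Finset.sum_congr rfl
      intro k _
      rw [map_smul, ih _ (fun j => hg _), smul_smul]
      congr 1
      have e1 : (Matrix.of fun i j : Fin (t+1) => M i (g j)).submatrix (Fin.last t).succAbove
        k.succAbove = Matrix.of fun i j : Fin t => M i (g (k.succAbove j)) := by
        ext i j; simp
      rw [e1]
      have e2 : ((-1:S))^t * (-1)^t = 1 := by rw [← pow_add]; simp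
      simp only [Fin.val_last, Matrix.of_apply, pow_add]
      linear_combination (-(-1)^(k:ℕ) * M t (g k) * s * 
        (Matrix.of fun i j : Fin t => M i (g (k.succAbove j))).det) * e2

lemma eps_Dc_wg (M : ℕ → ℕ → S) (n t : ℕ) : ∀ m, m ≠ t → ∀ g : Fin m → ℕ, (∀ j, g j < n) →
    eps n (Dc M n t (wg n m g)) = 0 := by
  induction t with
  | zero =>
    intro m hm g hg
    obtain ⟨m, rfl⟩ : ∃ s, m = s+1 := ⟨m-1, by omega⟩
    simp [Dc, wg, eps_wd]
  | succ t ih =>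
    intro m hm g hg
    simp only [Dc, LinearMap.comp_apply]
    cases m with
    | zero => simp [wg, con_one]
    | succ m =>
      rw [con_wg _ _ _ _ hg, map_sum, map_sum]
      apply Finset.sum_eq_zero
      intro k _
      rw [map_smul, map_smul, ih m (by omega) _ (fun j => hg _), smul_zero]

lemma inl_wg (n m : ℕ) : ∀ (g : Fin m → ℕ), (∀ j, g j < n) →
    inl n (wg n m g : Ext S n) = wg (n+1) m g := by
  induction m with
  | zero => intro g _; simp [wg, one_succ]
  | succ m ih =>
    intro g hg
    rw [wg, wg, ← ih _ (fun j => hg _), wd_ne _ _ (hg 0).ne]; simp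

lemma span_wg (n : ℕ) : ∀ w : Ext S n,
    w ∈ Submodule.span S {v | ∃ m, ∃ g : Fin m → ℕ, (∀ j, g j < n) ∧ v = wg n m g} := by
  induction n with
  | zero =>
    intro w
    have : w = eps 0 w • one S 0 := by
      ext f
      have : f = fun _ => false := Subsingleton.elim _ _
      subst this
      simp [eps, one]
    rw [this]
    exact Submodule.smul_mem _ _ (Submodule.subset_span ⟨0, Fin.elim0, fun j => j.elim0, rfl⟩)
  | succ n ih =>
    intro w
    have e : w = inl n (p1 n w) + inr n (p2 n w) := by apply ext_pair <;> simp
    rw [e]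
    refine add_mem ?_ ?_
    · suffices h : _ ≤ Submodule.comap (inl n) (Submodule.span S
          {v | ∃ m, ∃ g : Fin m → ℕ, (∀ j, g j < n + 1) ∧ v = wg (n+1) m g}) from h (ih (p1 n w))
      rw [Submodule.span_le]
      rintro _ ⟨m, g, hg, rfl⟩
      exact Submodule.subset_span ⟨m, g, fun j => (hg j).trans (by omega), inl_wg _ _ _ hg⟩
    · suffices h : _ ≤ Submodule.comap (inr n) (Submodule.span S
          {v | ∃ m, ∃ g : Fin m → ℕ, (∀ j, g j < n + 1) ∧ v = wg (n+1) m g}) from h (ih (p2 n w))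
      rw [Submodule.span_le]
      rintro _ ⟨m, g, hg, rfl⟩
      refine Submodule.subset_span ⟨m+1, Fin.cons n g, ?_, ?_⟩
      · intro j; refine Fin.cases ?_ (fun j => ?_) j
        · simp
        · simpa using (hg j).trans (Nat.lt_succ_self n)
      · simp only [wg, Fin.cons_zero, Fin.cons_succ]
        rw [wd_self, ← inl_wg _ _ _ hg, p1_inl]

noncomputable def Jn (M : ℕ → ℕ → S) (n t : ℕ) : Ideal S := LinearMap.range (eps n ∘ₗ Dc M n t)

lemma det_mem_Jn (M : ℕ → ℕ → S) (n t : ℕ) (g : Fin t → ℕ) (hg : ∀ j, g j < n) :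
    (Matrix.of fun i j : Fin t => M i (g j)).det ∈ Jn M n t := by
  obtain ⟨s, hs, h⟩ := Dc_wg M n t
  refine ⟨s • wg n t g, ?_⟩
  simp only [LinearMap.comp_apply, map_smul, h g hg, eps_one, smul_eq_mul]
  linear_combination (Matrix.of fun i j : Fin t => M i (g j)).det * hs

lemma Dc_one (M : ℕ → ℕ → S) (n t : ℕ) (w : Ext S n) :
    ∃ w', Dc M n t w' = eps n (Dc M n t w) • one S n := by
  induction span_wg n w using Submodule.span_induction with
  | mem v hv =>
    obtain ⟨m, g, hg, rfl⟩ := hv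
    by_cases hm : m = t
    · subst hm
      obtain ⟨s, hs, h⟩ := Dc_wg M n m
      exact ⟨wg n m g, by rw [h g hg]; simp [eps_one]⟩
    · exact ⟨0, by rw [eps_Dc_wg _ _ _ _ hm g hg]; simp⟩
  | zero => exact ⟨0, by simp⟩
  | add a b _ _ ha hb =>
    obtain ⟨a', ha⟩ := ha
    obtain ⟨b', hb⟩ := hb
    exact ⟨a' + b', by simp [ha, hb, add_smul]⟩
  | smul c a _ ha =>
    obtain ⟨a', ha⟩ := ha
    exact ⟨c • a', by simp [ha, smul_smul]⟩

lemma mem_Jn (M : ℕ → ℕ → S) (n t : ℕ) (y : S) :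
    y ∈ Jn M n t ↔ ∃ w, Dc M n t w = y • one S n := by
  constructor
  · rintro ⟨w, rfl⟩; exact Dc_one _ _ _ _
  · rintro ⟨w, hw⟩; exact ⟨w, by simp [hw, eps_one]⟩

lemma maximalMinors_eq {p q : ℕ} (A : Matrix (Fin p) (Fin q) S) (M : ℕ → ℕ → S)
    (h : ∀ i j, A i j = M i j) : maximalMinors A = Jn M q p := by
  apply le_antisymm
  · refine Ideal.span_le.2 ?_
    rintro _ ⟨g, rfl⟩
    have := det_mem_Jn M q p (fun j => g j) (fun j => (g j).2)
    have e : A.submatrix id g = Matrix.of fun i j : Fin p => M i (g j) := by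
      ext i j; simp [h]
    rw [SetLike.mem_coe, e]; exact this
  · rintro _ ⟨w, rfl⟩
    induction span_wg q w using Submodule.span_induction with
    | mem v hv =>
      obtain ⟨m, g, hg, rfl⟩ := hv
      by_cases hm : m = p
      · subst hm
        obtain ⟨s, hs, h'⟩ := Dc_wg M q m
        simp only [LinearMap.comp_apply, h' g hg, map_smul, eps_one, smul_eq_mul, mul_one]
        apply Ideal.mul_mem_left
        by_cases hi : Function.Injective g
        · refine Ideal.subset_span ⟨⟨fun j => ⟨g j, hg j⟩, fun a b hab => hi (by simpa using hab)⟩, ?_⟩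
          congr 1
          ext i j
          rw [Matrix.submatrix_apply, h]
          rfl
        · simp only [Function.Injective, not_forall] at hi
          obtain ⟨a, b, hab, hne⟩ := hi
          rw [Matrix.det_zero_of_column_eq hne (by intro i; simp [hab])]
          exact zero_mem _
      · simp only [LinearMap.comp_apply]; rw [eps_Dc_wg _ _ _ _ hm g hg]; exact zero_mem _
    | zero => simp
    | add a b _ _ ha hb => rw [map_add]; exact add_mem ha hb
    | smul c a _ ha => rw [map_smul]; exact Ideal.mul_mem_left _ _ ha

lemma Jn_le (M : ℕ → ℕ → S) (n t : ℕ) : Jn M n (t+1) ≤ Jn M n t := by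
  rintro _ ⟨w, rfl⟩
  exact ⟨con (M t) n w, rfl⟩

lemma Jn_decomp (M : ℕ → ℕ → S) (n t : ℕ) (h : ∀ i < t, M i n = 0) (y : S) :
    y ∈ Jn M (n+1) (t+1) ↔ ∃ g ∈ Jn M n t, ∃ h ∈ Jn M n (t+1), y = M t n * g + h := by
  constructor
  · rintro ⟨w, rfl⟩
    refine ⟨_, ⟨p2 n w, rfl⟩, _, ⟨p1 n w, rfl⟩, ?_⟩
    simp only [LinearMap.comp_apply]
    rw [eps_succ, p1_Dc_succ _ _ _ h, map_add, map_smul, smul_eq_mul, add_comm]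
  · rintro ⟨_, ⟨b, rfl⟩, _, ⟨a, rfl⟩, rfl⟩
    refine ⟨inl n a + inr n b, ?_⟩
    simp only [LinearMap.comp_apply]
    rw [eps_succ, p1_Dc_succ _ _ _ h, map_add, map_smul, smul_eq_mul, add_comm]
    simp
end link
end EN

namespace EN
universe u
section poly
variable {k : Type*} [Field k] {c : ℕ}

noncomputable def xR (k : Type*) [Field k] (c : ℕ) (i : ℕ) : MvPolynomial (Fin c) k :=
  if h : i < c then X ⟨i, h⟩ else 0

noncomputable def aR (k : Type*) [Field k] (c d : ℕ) : Ideal (MvPolynomial (Fin c) k) :=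
  Ideal.span (xR k c '' {i | d ≤ i})

noncomputable def psi (k : Type*) [Field k] (c d : ℕ) :
    MvPolynomial (Fin c) k →ₐ[k] MvPolynomial (Fin c) k :=
  aeval (fun i : Fin c => if d ≤ i.1 then 0 else X i)

lemma psi_sub (d : ℕ) (f : MvPolynomial (Fin c) k) : f - psi k c d f ∈ aR k c d := by
  rw [← Ideal.Quotient.eq]
  have : (Ideal.Quotient.mkₐ k (aR k c d)) = (Ideal.Quotient.mkₐ k (aR k c d)).comp (psi k c d) := by
    apply MvPolynomial.algHom_ext
    intro i
    simp only [AlgHom.comp_apply, psi, aeval_X]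
    split_ifs with h
    · rw [map_zero]
      apply Ideal.Quotient.eq_zero_iff_mem.2
      exact Ideal.subset_span ⟨i, h, by simp [xR]⟩
    · rfl
  exact DFunLike.congr_fun this f

lemma psi_zero (d : ℕ) (f : MvPolynomial (Fin c) k) : psi k c d f = 0 ↔ f ∈ aR k c d := by
  constructor
  · intro h; have := psi_sub d f; rwa [h, sub_zero] at this
  · intro h
    have : aR k c d ≤ RingHom.ker (psi k c d) := by
      rw [aR, Ideal.span_le]
      rintro _ ⟨i, hi, rfl⟩
      simp only [SetLike.mem_coe, RingHom.mem_ker, xR]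
      split_ifs with h
      · simp only [psi, aeval_X]; exact if_pos hi
      · simp
    exact this h

lemma psi_x {d i : ℕ} (h : i < d) (hc : i < c) : psi k c d (xR k c i) ≠ 0 := by
  simp only [xR, hc, dite_true, psi, aeval_X]
  rw [if_neg (by simpa using h)]
  exact X_ne_zero _

variable (n : Ideal (MvPolynomial (Fin c) k)) [n.IsPrime]

noncomputable def aS (d : ℕ) : Ideal (Localization.AtPrime n) :=
  (aR k c d).map (algebraMap _ _)

lemma aS_nzd (hn : ∀ i, xR k c i ∈ n) {d : ℕ} (hd : d < c) (y : Localization.AtPrime n)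
    (h : algebraMap _ _ (xR k c d) * y ∈ aS n (d+1)) : y ∈ aS n (d+1) := by
  obtain ⟨⟨r, s⟩, hr⟩ := IsLocalization.surj n.primeCompl y
  simp only at hr
  have h1 : algebraMap _ (Localization.AtPrime n) (xR k c d * r) ∈ aS n (d+1) := by
    rw [map_mul, ← hr, ← mul_assoc]
    exact Ideal.mul_mem_right _ _ h
  rw [aS, IsLocalization.algebraMap_mem_map_algebraMap_iff n.primeCompl] at h1
  obtain ⟨s', hs', h1⟩ := h1
  have hle : aR k c (d+1) ≤ n := by
    rw [aR, Ideal.span_le]; rintro _ ⟨i, _, rfl⟩; exact hn i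
  rw [← psi_zero, map_mul, map_mul] at h1
  have h2 : psi k c (d+1) r = 0 := by
    rcases mul_eq_zero.1 h1 with h1 | h1
    · exact absurd (hle ((psi_zero _ _).1 h1)) hs'
    · exact (mul_eq_zero.1 h1).resolve_left (psi_x (by omega) hd)
  have h3 : algebraMap _ (Localization.AtPrime n) r ∈ aS n (d+1) :=
    Ideal.mem_map_of_mem _ ((psi_zero _ _).1 h2)
  rw [← hr] at h3
  exact (Ideal.unit_mul_mem_iff_mem _ (IsLocalization.map_units (Localization.AtPrime n) s)).1
    (by rwa [mul_comm])

lemma aS_le (d : ℕ) : aS n (d+1) ≤ aS n d :=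
  Ideal.map_mono (Ideal.span_mono (Set.image_mono (fun i (hi : d+1 ≤ i) => (by
    show d ≤ i
    omega))))

lemma aS_sup (d : ℕ) (y) (hy : y ∈ aS n d) :
    ∃ z, y - algebraMap _ _ (xR k c d) * z ∈ aS n (d+1) := by
  have h : aS n d ≤ Ideal.span {algebraMap _ _ (xR k c d)} ⊔ aS n (d+1) := by
    rw [aS, Ideal.map_le_iff_le_comap, aR, Ideal.span_le]
    rintro _ ⟨i, hi, rfl⟩
    rcases (show d ≤ i from hi).eq_or_lt with rfl | h
    · exact Ideal.mem_sup_left (Ideal.mem_span_singleton_self _)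
    · exact Ideal.mem_sup_right (Ideal.mem_map_of_mem _ (Ideal.subset_span ⟨i, h, rfl⟩))
  obtain ⟨a, ha, b, hb, rfl⟩ := Submodule.mem_sup.1 (h hy)
  obtain ⟨z, rfl⟩ := Ideal.mem_span_singleton'.1 ha
  exact ⟨z, by convert hb using 1; ring⟩

lemma aS_self (d : ℕ) : algebraMap _ _ (xR k c d) ∈ aS n d :=
  Ideal.mem_map_of_mem _ (Ideal.subset_span ⟨d, le_refl d, rfl⟩)

lemma aS_bot (d : ℕ) (h : c ≤ d) : aS n d = ⊥ := by
  rw [aS, eq_bot_iff, Ideal.map_le_iff_le_comap, aR, Ideal.span_le]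
  rintro _ ⟨i, hi, rfl⟩
  have : ¬ i < c := by have : d ≤ i := hi; omega
  simp [xR, this]

lemma P_local (hn : ∀ i, xR k c i ∈ n) (d : ℕ) (hd : d < c) (s : ℕ)
    (M : ℕ → ℕ → Localization.AtPrime n)
    (h1 : ∀ i j, j < d → ∃ a, 0 < a ∧ M i (i+j) = algebraMap _ _ (xR k c j) ^ a)
    (h2 : ∀ i j, i + d ≤ j → M i j ∈ aS n d) :
    P (fun i j => Ideal.Quotient.mk (aS n d) (M i j)) (s+d) (s+1) := by
  refine P_main (fun d => Localization.AtPrime n ⧸ aS n d)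
    (fun d => Ideal.Quotient.factor (aS_le n d)) (fun d => Ideal.Quotient.factor_surjective _)
    (fun d i => Ideal.Quotient.mk _ (algebraMap _ _ (xR k c i))) ?_ c ?_ ?_ ?_ ?_ d hd.le s _ ?_ ?_
  · intro d i; exact Ideal.Quotient.factor_mk _ _
  · intro d
    simp only [Ideal.Quotient.factor_mk]
    exact Ideal.Quotient.eq_zero_iff_mem.2 (aS_self n d)
  · intro d hd y hy
    obtain ⟨y, rfl⟩ := Ideal.Quotient.mk_surjective y
    simp only [Ideal.Quotient.factor_mk] at hy
    obtain ⟨z, hz⟩ := aS_sup n d y (Ideal.Quotient.eq_zero_iff_mem.1 hy)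
    exact ⟨Ideal.Quotient.mk _ z, by rw [← map_mul]; exact Ideal.Quotient.eq.2 hz⟩
  · intro d hd y hy
    obtain ⟨y, rfl⟩ := Ideal.Quotient.mk_surjective y
    rw [← map_mul, Ideal.Quotient.eq_zero_iff_mem] at hy
    exact Ideal.Quotient.eq_zero_iff_mem.2 (aS_nzd n hn hd y hy)
  · intro d hd
    rw [Ideal.mem_jacobson_bot]
    intro y
    obtain ⟨y, rfl⟩ := Ideal.Quotient.mk_surjective y
    have : algebraMap _ (Localization.AtPrime n) (xR k c d) ∈
        Ideal.jacobson (⊥ : Ideal (Localization.AtPrime n)) := by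
      rw [IsLocalRing.jacobson_eq_maximalIdeal _ bot_ne_top,
        IsLocalization.AtPrime.to_map_mem_maximal_iff _ n]
      exact hn d
    rw [Ideal.mem_jacobson_bot] at this
    have h := (this y).map (Ideal.Quotient.mk (aS n (d+1)))
    simpa using h
  · intro i j hj
    obtain ⟨a, ha, e⟩ := h1 i j hj
    exact ⟨a, ha, by rw [e, map_pow]⟩
  · intro i j hij
    exact Ideal.Quotient.eq_zero_iff_mem.2 (h2 i j hij)

lemma x_mem_of_Jn_le (d s : ℕ) (M : ℕ → ℕ → MvPolynomial (Fin c) k)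
    (h0 : ∀ i j, j < i → M i j = 0)
    (h1 : ∀ i j, j < d → ∃ a, 0 < a ∧ M i (i+j) = xR k c j ^ a)
    (hJ : Jn M (s+d) (s+1) ≤ n) : ∀ i < d, xR k c i ∈ n := by
  intro i
  induction i using Nat.strong_induction_on with
  | _ i ih =>
    intro hi
    have hdet := hJ (det_mem_Jn M (s+d) (s+1) (fun r => r.1 + i) (fun r => by have := r.2; omega))
    rw [← Ideal.Quotient.eq_zero_iff_mem, RingHom.map_det, Matrix.det_of_isUpperTriangular] at hdet
    · rw [Finset.prod_eq_zero_iff] at hdet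
      obtain ⟨r, _, hr⟩ := hdet
      simp only [RingHom.mapMatrix_apply, Matrix.map_apply, Matrix.of_apply] at hr
      obtain ⟨a, ha, e⟩ := h1 r i hi
      rw [e, Ideal.Quotient.eq_zero_iff_mem] at hr
      exact Ideal.IsPrime.mem_of_pow_mem ‹_› _ hr
    · intro p q hpq
      simp only [id] at hpq
      have hpq' : q.1 < p.1 := hpq
      simp only [RingHom.mapMatrix_apply, Matrix.map_apply, Matrix.of_apply]
      rw [Ideal.Quotient.eq_zero_iff_mem]
      by_cases h : q.1 + i < p.1
      · rw [h0 _ _ h]; exact zero_mem _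
      · obtain ⟨a, ha, e⟩ := h1 p (q.1 + i - p.1) (by omega)
        rw [show p.1 + (q.1 + i - p.1) = q.1 + i by omega] at e
        rw [e]
        exact Ideal.pow_mem_of_mem _ (ih _ (by omega) (by omega)) _ ha

end poly

lemma mp_one {S T : Type*} [CommRing S] [CommRing T] (al : S →+* T) (n : ℕ) :
    (fun f => al (one S n f)) = one T n := by
  ext f; simp only [one, Pi.single_apply]; split_ifs <;> simp

lemma descend {R S : Type u} [CommRing R] [CommRing S] [Algebra R S] (N : Submonoid R)
    [IsLocalization N S] (hinj : Function.Injective (algebraMap R S)) (M : ℕ → ℕ → R) (n t : ℕ)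
    (g : R) (f : Ext S n)
    (hf : algebraMap R S g • one S n = Dc (fun i j => algebraMap R S (M i j)) n t f) :
    ∃ b ∈ N, b * g ∈ Jn M n t := by
  obtain ⟨b, hb⟩ := IsLocalization.exist_integer_multiples_of_finite N f
  choose f' hf' using hb
  have hone : mp (algebraMap R S) n (one R n) = one S n := mp_one _ _
  have hff : mp (algebraMap R S) n f' = algebraMap R S b • f := by
    ext i
    refine (hf' i).trans ?_
    rw [Pi.smul_apply]
    exact Algebra.smul_def _ _
  have h3 : mp (algebraMap R S) n (Dc M n t f') =
      mp (algebraMap R S) n (((b : R) * g) • one R n) := by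
    rw [mp_Dc, hff, map_smul, ← hf, mp_smul, hone, map_mul, mul_smul]
  have h4 : Dc M n t f' = ((b : R) * g) • one R n := by
    ext1 i
    exact hinj (congrFun h3 i)
  exact ⟨b, b.2, (mem_Jn _ _ _ _).2 ⟨f', h4⟩⟩

lemma ascend {R S : Type u} [CommRing R] [CommRing S] (al : R →+* S) (M : ℕ → ℕ → R) (n t : ℕ)
    (x g : R) (m : ℕ) (hg : x ^ m * g ∈ Jn M n t) :
    ∃ f, al x ^ m • (al g • one S n) = Dc (fun i j => al (M i j)) n t f := by
  obtain ⟨w, hw⟩ := (mem_Jn _ _ _ _).1 hg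
  have hone : mp al n (one R n) = one S n := mp_one _ _
  have hw' := congrArg (mp al n) hw
  rw [mp_Dc, mp_smul, hone, map_mul, map_pow, mul_smul] at hw'
  exact ⟨_, hw'.symm⟩

lemma N_pow_quot {S : Type u} [CommRing S] (I : Ideal S) (x : S)
    (hk : ∀ y ∈ I, ∃ z, y = x * z) (hφx : x ∈ I) (hx : ∀ y, x * y = 0 → y = 0)
    (M : ℕ → ℕ → S) (n t : ℕ) (hP : P (fun i j => Ideal.Quotient.mk I (M i j)) n t) (m : ℕ)
    (v : Ext S n) (h : ∃ f, x ^ m • v = Dc M n t f) : ∃ f, v = Dc M n t f :=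
  N_pow (Ideal.Quotient.mk I) Ideal.Quotient.mk_surjective x
    (fun y hy => hk y (Ideal.Quotient.eq_zero_iff_mem.1 hy))
    (Ideal.Quotient.eq_zero_iff_mem.2 hφx) hx M n t hP m v h

lemma local_nzd {k : Type*} [Field k] (d s : ℕ) (n : Ideal (MvPolynomial (Fin (d+1)) k))
    [n.IsPrime] (hx : ∀ i, xR k (d+1) i ∈ n) (M : ℕ → ℕ → Localization.AtPrime n)
    (hP : P (fun i j => Ideal.Quotient.mk (aS n d) (M i j)) (s+d) (s+1)) (m : ℕ)
    (v : Ext (Localization.AtPrime n) (s+d))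
    (hv : ∃ f, algebraMap _ (Localization.AtPrime n) (xR k (d+1) d) ^ m • v
      = Dc M (s+d) (s+1) f) :
    ∃ f, v = Dc M (s+d) (s+1) f := by
  have hk : ∀ y ∈ aS n d,
      ∃ z, y = algebraMap _ (Localization.AtPrime n) (xR k (d+1) d) * z := by
    intro y hy
    obtain ⟨z, hz⟩ := aS_sup n d y hy
    rw [aS_bot n (d+1) le_rfl, Submodule.mem_bot] at hz
    exact ⟨z, sub_eq_zero.1 hz⟩
  have hz : ∀ y, algebraMap _ (Localization.AtPrime n) (xR k (d+1) d) * y = 0 → y = 0 := by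
    intro y hy
    have := aS_nzd n hx (d := d) (by omega) y (by rw [hy]; exact zero_mem _)
    rwa [aS_bot n (d+1) le_rfl, Submodule.mem_bot] at this
  exact N_pow_quot (aS n d) _ hk (aS_self n d) hz M _ _ hP m v hv

lemma P_local' {k : Type*} [Field k] (d s : ℕ) (n : Ideal (MvPolynomial (Fin (d+1)) k))
    [n.IsPrime] (hx : ∀ i, xR k (d+1) i ∈ n) (M : ℕ → ℕ → MvPolynomial (Fin (d+1)) k)
    (h1 : ∀ i j, j < d+1 → ∃ a, 0 < a ∧ M i (i+j) = xR k (d+1) j ^ a)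
    (h2 : ∀ i j, i + (d+1) ≤ j → M i j = 0) :
    P (fun i j => Ideal.Quotient.mk (aS n d)
      (algebraMap _ (Localization.AtPrime n) (M i j))) (s+d) (s+1) := by
  apply P_local n hx d (by omega) s (fun i j => algebraMap _ (Localization.AtPrime n) (M i j))
  · intro i j hj
    obtain ⟨a, ha, e⟩ := h1 i j (by omega)
    exact ⟨a, ha, by simp only [e, map_pow]⟩
  · intro i j hij
    rcases hij.eq_or_lt with rfl | h
    · obtain ⟨a, ha, e⟩ := h1 i d (by omega)
      simp only [e, map_pow]
      exact Ideal.pow_mem_of_mem _ (aS_self n d) _ ha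
    · simp only [h2 i j (by omega), map_zero]; exact zero_mem _

theorem nzd_poly {k : Type*} [Field k] (d s : ℕ) (M : ℕ → ℕ → MvPolynomial (Fin (d+1)) k)
    (h0 : ∀ i j, j < i → M i j = 0)
    (h1 : ∀ i j, j < d+1 → ∃ a, 0 < a ∧ M i (i+j) = xR k (d+1) j ^ a)
    (h2 : ∀ i j, i + (d+1) ≤ j → M i j = 0) (m : ℕ) (g : MvPolynomial (Fin (d+1)) k)
    (hg : xR k (d+1) d ^ m * g ∈ Jn M (s+d) (s+1)) : g ∈ Jn M (s+d) (s+1) := by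
  by_contra hcon
  obtain ⟨Q, memQ⟩ : ∃ Q : Ideal (MvPolynomial (Fin (d+1)) k),
      ∀ r, r ∈ Q ↔ r * g ∈ Jn M (s+d) (s+1) :=
    ⟨Submodule.comap (LinearMap.mulRight (MvPolynomial (Fin (d+1)) k) g) (Jn M (s+d) (s+1)),
      fun r => Iff.rfl⟩
  have hQ : Q ≠ ⊤ := by
    rw [Ideal.ne_top_iff_one, memQ, one_mul]; exact hcon
  obtain ⟨n, hmax, hQn⟩ := Ideal.exists_le_maximal Q hQ
  have : n.IsPrime := hmax.isPrime
  have hJn : Jn M (s+d) (s+1) ≤ n := fun r hr => hQn ((memQ r).2 (Ideal.mul_mem_right _ _ hr))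
  have hx : ∀ i, xR k (d+1) i ∈ n := by
    intro i
    rcases lt_trichotomy i d with h | h | h
    · exact x_mem_of_Jn_le n d s M h0 (fun i j hj => h1 i j (by omega)) hJn i h
    · rw [h]
      exact Ideal.IsPrime.mem_of_pow_mem this m (hQn ((memQ _).2 hg))
    · simp [xR, show ¬ i < d+1 by omega]
  have hinj : Function.Injective (algebraMap (MvPolynomial (Fin (d+1)) k)
      (Localization.AtPrime n)) :=
    IsLocalization.injective _ n.primeCompl_le_nonZeroDivisors
  obtain ⟨f, hf⟩ := local_nzd d s n hx _ (P_local' d s n hx M h1 h2) m _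
    (ascend (algebraMap _ (Localization.AtPrime n)) M (s+d) (s+1) _ g m hg)
  obtain ⟨b, hb, hbg⟩ := descend n.primeCompl hinj M (s+d) (s+1) g f hf
  exact hb (hQn ((memQ _).2 hbg))

end EN

/-- With `I = I(A)`, `I' = I(A')` (last row and column of `A` deleted),
`J = I(B)` (last column of `A` deleted) and `a = u_{t+c-1,t}`, one has `J ⊆ I'` and the
sequence `0 → J → I' × J → I → 0`, with maps `f ↦ (f, -x_c^a f)` and `(g,h) ↦ x_c^a g + h`,
is exact: the first map is injective, the second is well defined with values in `I` and
surjective onto `I`, and the kernel of the second map is the image of the first. -/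
theorem stmt_3 {k : Type*} [Field k] (c t : ℕ) (hc : 1 ≤ c) (ht : 2 ≤ t)
    (u : Fin (t + c - 1) → Fin t → ℕ)
    (hupos : ∀ j i, 0 < u j i)
    (hurow : ∀ (j j' : Fin (t + c - 1)) (i : Fin t), j ≤ j' → u j i ≤ u j' i)
    (hucol : ∀ (j : Fin (t + c - 1)) (i i' : Fin t), i ≤ i' → u j i ≤ u j i')
    (A : Matrix (Fin t) (Fin (t + c - 1)) (MvPolynomial (Fin c) k))
    (hA : ∀ i j, A i j =
      if h : i.1 ≤ j.1 ∧ j.1 < i.1 + c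
      then X (⟨j.1 - i.1, by omega⟩ : Fin c) ^ u j i else 0)
    (A' : Matrix (Fin (t - 1)) (Fin (t + c - 2)) (MvPolynomial (Fin c) k))
    (hA' : A' = A.submatrix (Fin.castLE (show t - 1 ≤ t by omega))
      (Fin.castLE (show t + c - 2 ≤ t + c - 1 by omega)))
    (B : Matrix (Fin t) (Fin (t + c - 2)) (MvPolynomial (Fin c) k))
    (hB : B = A.submatrix id (Fin.castLE (show t + c - 2 ≤ t + c - 1 by omega)))
    (I I' J : Ideal (MvPolynomial (Fin c) k))
    (hI : I = maximalMinors A) (hI' : I' = maximalMinors A') (hJ : J = maximalMinors B)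
    (xa : MvPolynomial (Fin c) k)
    (hxa : xa = X (⟨c - 1, by omega⟩ : Fin c) ^
      u (⟨t + c - 2, by omega⟩ : Fin (t + c - 1)) (⟨t - 1, by omega⟩ : Fin t)) :
    J ≤ I' ∧
    -- the first map `f ↦ (f, -x_c^a f)` is injective
    (∀ f ∈ J, ∀ f' ∈ J,
      ((f, -(xa * f)) : MvPolynomial (Fin c) k × MvPolynomial (Fin c) k) =
        (f', -(xa * f')) → f = f') ∧
    -- the second map `(g, h) ↦ x_c^a g + h` takes its values in `I`
    (∀ g ∈ I', ∀ h ∈ J, xa * g + h ∈ I) ∧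
    -- the second map is surjective onto `I`
    (∀ p ∈ I, ∃ g ∈ I', ∃ h ∈ J, p = xa * g + h) ∧
    -- the kernel of the second map is exactly the image of the first
    (∀ g ∈ I', ∀ h ∈ J,
      (xa * g + h = 0 ↔ ∃ f ∈ J, g = f ∧ h = -(xa * f))) := by
  obtain ⟨d, rfl⟩ : ∃ d, c = d + 1 := ⟨c - 1, by omega⟩
  obtain ⟨s, rfl⟩ : ∃ s, t = s + 1 := ⟨t - 1, by omega⟩
  let v : ℕ → ℕ → ℕ := fun j i =>
    if h : j < s + 1 + (d + 1) - 1 ∧ i < s + 1 then u ⟨j, h.1⟩ ⟨i, h.2⟩ else 1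
  have hv : ∀ j i, 0 < v j i := by
    intro j i
    simp only [v]
    split_ifs
    · exact hupos _ _
    · exact one_pos
  let M : ℕ → ℕ → MvPolynomial (Fin (d + 1)) k := fun i j =>
    if i ≤ j ∧ j < i + (d + 1) then EN.xR k (d + 1) (j - i) ^ v j i else 0
  have hAM : ∀ i j, A i j = M i j := by
    intro i j
    rw [hA]
    simp only [M]
    split_ifs with h
    · have e : v j i = u j i := by
        simp only [v]
        rw [dif_pos ⟨j.2, i.2⟩]
      rw [e, EN.xR, dif_pos (by omega)]
    · rfl
  have hM0 : ∀ i j, j < i → M i j = 0 := fun i j h => if_neg (by omega)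
  have hM2 : ∀ i j, i + (d + 1) ≤ j → M i j = 0 := fun i j h => if_neg (by omega)
  have hM1 : ∀ i j, j < d + 1 → ∃ a, 0 < a ∧ M i (i + j) = EN.xR k (d + 1) j ^ a := by
    intro i j hj
    refine ⟨v (i + j) i, hv _ _, ?_⟩
    simp only [M]
    rw [if_pos (by omega), Nat.add_sub_cancel_left]
  have en : s + 1 + (d + 1) - 1 = s + d + 1 := by omega
  have en' : s + 1 + (d + 1) - 2 = s + d := by omega
  have eI : I = EN.Jn M (s + d + 1) (s + 1) := by
    rw [hI, EN.maximalMinors_eq A M hAM, en]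
  have eI' : I' = EN.Jn M (s + d) s := by
    rw [hI', EN.maximalMinors_eq A' M (fun i j => by rw [hA', Matrix.submatrix_apply, hAM]; rfl),
      en', Nat.add_sub_cancel]
  have eJ : J = EN.Jn M (s + d) (s + 1) := by
    rw [hJ, EN.maximalMinors_eq B M (fun i j => by rw [hB, Matrix.submatrix_apply, hAM]; rfl), en']
  have exa : xa = EN.xR k (d + 1) d ^ v (s + d) s := by
    rw [hxa, EN.xR, dif_pos (by omega)]
    simp only [v]
    rw [dif_pos ⟨by omega, by omega⟩]
    congr 2
    · simp only [Fin.mk.injEq]; omega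
  have exM : M s (s + d) = xa := by
    rw [exa]
    simp only [M]
    rw [if_pos (by omega), Nat.add_sub_cancel_left]
  have hdec := EN.Jn_decomp M (s + d) s (fun i hi => hM2 _ _ (by omega))
  rw [exM] at hdec
  rw [← eI, ← eI', ← eJ] at hdec
  refine ⟨?_, ?_, ?_, ?_, ?_⟩
  · rw [eI', eJ]; exact EN.Jn_le M _ _
  · intro f _ f' _ h
    exact congrArg Prod.fst h
  · intro g hg h hh
    exact (hdec _).2 ⟨g, hg, h, hh, rfl⟩
  · intro p hp
    exact (hdec p).1 hp
  · intro g hg h hh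
    constructor
    · intro e
      have e' : h = -(xa * g) := eq_neg_of_add_eq_zero_right e
      refine ⟨g, ?_, rfl, e'⟩
      rw [eJ]
      apply EN.nzd_poly d s M hM0 hM1 hM2 (v (s + d) s)
      rw [← exa, ← eJ, ← neg_mem_iff, ← e']
      exact hh
    · rintro ⟨f, _, rfl, rfl⟩
      exact add_neg_cancel _
end

section
/- Let t ≥ 2, let A'' be the (t−1)×(t+c−2) matrix obtained from A by deleting its first row and first column, let C be the t×(t+c−2) matrix obtained from A by deleting its first column, and set I = I(A), I'' = I(A''), K = I(C), and b = u_{1,1}. Then K ⊆ I'', and the sequence of R-modules 0 → K → I'' × K → I → 0 is exact, where the first map sends f to (f, −x_1^b·f) and the second map sends (g,h) to x_1^b·g + h; that is, the first map is injective, the second map is well defined (its values lie in I) and surjective onto I, and the kernel of the second map equals the image of the first. -/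
open MvPolynomial Matrix

namespace ENBand

variable {R : Type*} [CommRing R]

/-- Prepend the column `0`. -/
def consE {t n : ℕ} (h : Fin t ↪o Fin n) : Fin (t + 1) ↪o Fin (n + 1) :=
  OrderEmbedding.ofStrictMono (Fin.cons 0 (fun i => (h i).succ)) (by
    intro a b hab
    induction b using Fin.cases with
    | zero => exact absurd hab (Fin.not_lt_zero a)
    | succ b =>
      induction a using Fin.cases with
      | zero => simp
      | succ a => simpa using hab)

/-- Shift all columns by one. -/
def succE {t n : ℕ} (h : Fin t ↪o Fin n) : Fin t ↪o Fin (n + 1) :=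
  h.trans (Fin.succOrderEmb n)

/-- Omit the `j`-th column. -/
def delE {t n : ℕ} (h : Fin (t + 1) ↪o Fin n) (j : Fin (t + 1)) : Fin t ↪o Fin n :=
  (Fin.succAboveOrderEmb j).trans h

@[simp] lemma consE_zero {t n : ℕ} (h : Fin t ↪o Fin n) : consE h 0 = 0 := rfl
@[simp] lemma consE_succ {t n : ℕ} (h : Fin t ↪o Fin n) (i : Fin t) :
    consE h i.succ = (h i).succ := rfl
@[simp] lemma succE_apply {t n : ℕ} (h : Fin t ↪o Fin n) (i : Fin t) :
    succE h i = (h i).succ := rfl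
@[simp] lemma delE_apply {t n : ℕ} (h : Fin (t + 1) ↪o Fin n) (j : Fin (t + 1)) (i : Fin t) :
    delE h j i = h (j.succAbove i) := rfl

lemma delE_consE_zero {t n : ℕ} (h : Fin t ↪o Fin n) : delE (consE h) 0 = succE h := by
  ext i; simp

lemma delE_consE_succ {t n : ℕ} (h : Fin (t + 1) ↪o Fin n) (j : Fin (t + 1)) :
    delE (consE h) j.succ = consE (delE h j) := by
  ext i
  induction i using Fin.cases with
  | zero => simp
  | succ i => simp

lemma delE_succE {t n : ℕ} (h : Fin (t + 1) ↪o Fin n) (j : Fin (t + 1)) :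
    delE (succE h) j = succE (delE h j) := by
  ext i; simp

lemma exists_succE {t n : ℕ} (g : Fin t ↪o Fin (n + 1)) (hg : ∀ i, g i ≠ 0) :
    ∃ h, g = succE h := by
  refine ⟨OrderEmbedding.ofStrictMono (fun i => (g i).pred (hg i)) ?_, ?_⟩
  · intro a b hab
    simpa using hab
  · ext i
    change ((g i : Fin (n + 1)) : ℕ) = (((g i).pred (hg i)).succ : Fin (n + 1))
    simp

lemma cons_or_succ {t n : ℕ} (g : Fin (t + 1) ↪o Fin (n + 1)) :
    (∃ h, g = consE h) ∨ (∃ h, g = succE h) := by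
  by_cases h0 : g 0 = 0
  · left
    have h1 : ∀ i, (delE g 0) i ≠ 0 := by
      intro i hi
      have : g 0 < g i.succ := g.strictMono (Fin.succ_pos i)
      simp at hi
      rw [h0, hi] at this
      exact lt_irrefl _ this
    obtain ⟨h, hh⟩ := exists_succE _ h1
    refine ⟨h, ?_⟩
    ext i
    induction i using Fin.cases with
    | zero => simp [h0]
    | succ i =>
      have := congrArg (fun f => f i) hh
      simp at this
      simp [this]
  · right
    apply exists_succE
    intro i hi
    apply h0
    have : g 0 ≤ g i := g.monotone (Fin.zero_le i)
    rw [hi] at this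
    simpa using this

/-- Free module on `t`-subsets of the `n` columns. -/
abbrev Fr (R : Type*) [CommRing R] (t n : ℕ) := (Fin t ↪o Fin n) →₀ R

/-- The evaluation of basis vectors to maximal minors. -/
noncomputable def ev {t n : ℕ} (A : Matrix (Fin t) (Fin n) R) : Fr R t n →ₗ[R] R :=
  Finsupp.linearCombination R (fun g => (A.submatrix id g).det)

/-- Laplace expansion with coefficients the row `v`. -/
noncomputable def lap {t n : ℕ} (v : Fin n → R) (s : Fin (t + 1) ↪o Fin n) : Fr R t n :=
  ∑ j, Finsupp.single (delE s j) ((-1) ^ (j : ℕ) * v (s j))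

/-- The module of Eagon-Northcott relations. -/
noncomputable def EN {t n : ℕ} (A : Matrix (Fin t) (Fin n) R) : Submodule R (Fr R t n) :=
  Submodule.span R {y | ∃ s i, y = lap (A i) s}

@[simp] lemma ev_single {t n : ℕ} (A : Matrix (Fin t) (Fin n) R) (g) (r : R) :
    ev A (Finsupp.single g r) = r * (A.submatrix id g).det := by
  simp [ev]

lemma ev_lap {t n : ℕ} (A : Matrix (Fin t) (Fin n) R) (v : Fin n → R) (s) :
    ev A (lap v s) =
      (Matrix.of (Fin.cons (fun j => v (s j)) (fun i j => A i (s j)) :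
        Fin (t + 1) → Fin (t + 1) → R)).det := by
  rw [Matrix.det_succ_row_zero, lap, map_sum]
  refine Finset.sum_congr rfl fun j _ => ?_
  rw [ev_single]
  rfl

lemma ev_rel {t n : ℕ} (A : Matrix (Fin t) (Fin n) R) (i : Fin t) (s) :
    ev A (lap (A i) s) = 0 := by
  rw [ev_lap]
  apply Matrix.det_zero_of_row_eq (i := 0) (j := i.succ) (Fin.succ_ne_zero i).symm
  ext j
  simp

lemma ev_EN {t n : ℕ} (A : Matrix (Fin t) (Fin n) R) {y} (hy : y ∈ EN A) : ev A y = 0 := by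
  have : EN A ≤ LinearMap.ker (ev A) := by
    rw [EN, Submodule.span_le]
    rintro y ⟨s, i, rfl⟩
    exact ev_rel A i s
  exact this hy

/-- All syzygies of the maximal minors are Eagon-Northcott relations. -/
def Syz {t n : ℕ} (A : Matrix (Fin t) (Fin n) R) : Prop :=
  ∀ a, ev A a = 0 → a ∈ EN A

/-- Lifting property modulo `x`. -/
def Lft {t n : ℕ} (A : Matrix (Fin t) (Fin n) R) (x : R) : Prop :=
  ∀ e, x ∣ ev A e → ∃ y ∈ EN A, ∃ e1, e = y + x • e1

lemma Lft.pow [IsDomain R] {t n : ℕ} {A : Matrix (Fin t) (Fin n) R} {x : R} (hx : x ≠ 0)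
    (h : Lft A x) (b : ℕ) : Lft A (x ^ b) := by
  induction b with
  | zero => intro e _; exact ⟨0, Submodule.zero_mem _, e, by simp⟩
  | succ b ih =>
    rintro e ⟨r, hr⟩
    obtain ⟨y, hy, e1, rfl⟩ := h e ⟨x ^ b * r, by rw [hr]; ring⟩
    rw [map_add, ev_EN A hy, zero_add, map_smul, smul_eq_mul, pow_succ', mul_assoc] at hr
    have := mul_left_cancel₀ hx hr
    obtain ⟨y', hy', e2, rfl⟩ := ih e1 ⟨r, this⟩
    refine ⟨y + x • y', Submodule.add_mem _ hy (Submodule.smul_mem _ _ hy'), e2, ?_⟩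
    rw [smul_add, smul_smul, pow_succ', add_assoc]

lemma Lft.colon [IsDomain R] {t n : ℕ} {A : Matrix (Fin t) (Fin n) R} {x : R} (hx : x ≠ 0)
    (h : Lft A x) {f : R} {e} (he : ev A e = x * f) : ∃ e1, ev A e1 = f := by
  obtain ⟨y, hy, e1, rfl⟩ := h e ⟨f, he⟩
  rw [map_add, ev_EN A hy, zero_add, map_smul, smul_eq_mul] at he
  exact ⟨e1, mul_left_cancel₀ hx he⟩

section red
variable {S : Type*} [CommRing S] (π : R →+* S)

/-- Coefficientwise reduction. -/
noncomputable def red (t n : ℕ) : Fr R t n →+ Fr S t n :=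
  Finsupp.mapRange.addMonoidHom π.toAddMonoidHom

@[simp] lemma red_apply {t n : ℕ} (a : Fr R t n) (g) : red π t n a g = π (a g) := rfl

@[simp] lemma red_single {t n : ℕ} (g) (r : R) :
    red π t n (Finsupp.single g r) = Finsupp.single g (π r) := by
  simp [red]

lemma red_lap {t n : ℕ} (v : Fin n → R) (s : Fin (t + 1) ↪o Fin n) :
    red π t n (lap v s) = lap (fun j => π (v j)) s := by
  rw [lap, lap, map_sum]
  refine Finset.sum_congr rfl fun j _ => ?_
  rw [red_single]
  simp only [map_mul, map_pow, map_neg, map_one]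

lemma red_smul {t n : ℕ} (r : R) (a : Fr R t n) : red π t n (r • a) = π r • red π t n a := by
  ext g; simp

lemma ev_red {t n : ℕ} (A : Matrix (Fin t) (Fin n) R) (a) :
    ev (A.map π) (red π t n a) = π (ev A a) := by
  induction a using Finsupp.induction_linear with
  | zero => simp
  | add a b ha hb => simp [ha, hb]
  | single g r =>
    rw [red_single, ev_single, ev_single, map_mul, RingHom.map_det]
    rfl

lemma exists_lift (hπ : Function.Surjective π) {t n : ℕ} (A : Matrix (Fin t) (Fin n) R) {y}
    (hy : y ∈ EN (A.map π)) : ∃ z ∈ EN A, red π t n z = y := by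
  induction hy using Submodule.span_induction with
  | mem y hy =>
    obtain ⟨s, i, rfl⟩ := hy
    exact ⟨lap (A i) s, Submodule.subset_span ⟨s, i, rfl⟩, red_lap π _ _⟩
  | zero => exact ⟨0, Submodule.zero_mem _, map_zero _⟩
  | add y y' _ _ h h' =>
    obtain ⟨z, hz, rfl⟩ := h
    obtain ⟨z', hz', rfl⟩ := h'
    exact ⟨z + z', Submodule.add_mem _ hz hz', map_add _ _ _⟩
  | smul r y _ h =>
    obtain ⟨z, hz, rfl⟩ := h
    obtain ⟨r, rfl⟩ := hπ r
    exact ⟨r • z, Submodule.smul_mem _ _ hz, red_smul π _ _⟩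

lemma exists_div {t n : ℕ} {x : R} (hk : ∀ r, π r = 0 → x ∣ r) (a : Fr R t n)
    (ha : red π t n a = 0) : ∃ b, a = x • b := by
  have h : ∀ g, ∃ r, a g = x * r := fun g => hk _ (by rw [← red_apply, ha]; rfl)
  choose f hf using h
  refine ⟨Finsupp.equivFunOnFinite.symm f, ?_⟩
  ext g
  simp [hf]

lemma Syz.lft (hπ : Function.Surjective π) {x : R} (hx : π x = 0)
    (hk : ∀ r, π r = 0 → x ∣ r) {t n : ℕ} {A : Matrix (Fin t) (Fin n) R}
    (h : Syz (A.map π)) : Lft A x := by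
  rintro e ⟨r, hr⟩
  have h1 : ev (A.map π) (red π t n e) = 0 := by rw [ev_red, hr, map_mul, hx, zero_mul]
  obtain ⟨y, hy, hy'⟩ := exists_lift π hπ A (h _ h1)
  obtain ⟨b, hb⟩ := exists_div π hk (e - y) (by rw [map_sub, hy', sub_self])
  exact ⟨y, hy, b, by rw [← hb]; abel⟩

end red

/-- Linear extension of `consE`. -/
noncomputable def consL (R : Type*) [CommRing R] (t n : ℕ) : Fr R t n →ₗ[R] Fr R (t + 1) (n + 1) :=
  Finsupp.lmapDomain R R consE

/-- Linear extension of `succE`. -/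
noncomputable def succL (R : Type*) [CommRing R] (t n : ℕ) : Fr R t n →ₗ[R] Fr R t (n + 1) :=
  Finsupp.lmapDomain R R succE

/-- Linear extension of `lap`. -/
noncomputable def lapL {t n : ℕ} (v : Fin n → R) : Fr R (t + 1) n →ₗ[R] Fr R t n :=
  Finsupp.linearCombination R (lap v)

@[simp] lemma consL_single {t n : ℕ} (g) (r : R) :
    consL R t n (Finsupp.single g r) = Finsupp.single (consE g) r := by simp [consL]

@[simp] lemma succL_single {t n : ℕ} (g) (r : R) :
    succL R t n (Finsupp.single g r) = Finsupp.single (succE g) r := by simp [succL]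

lemma lap_consE {t n : ℕ} (v : Fin (n + 1) → R) (h : Fin (t + 1) ↪o Fin n) :
    lap v (consE h) = Finsupp.single (succE h) (v 0) - consL R t n (lap (fun j => v j.succ) h) := by
  rw [lap, Fin.sum_univ_succ, delE_consE_zero, lap, map_sum, sub_eq_add_neg,
    ← Finset.sum_neg_distrib]
  congr 1
  · simp
  · refine Finset.sum_congr rfl fun j _ => ?_
    rw [delE_consE_succ, consL_single, ← Finsupp.single_neg]
    simp [pow_succ]

lemma lap_succE {t n : ℕ} (v : Fin (n + 1) → R) (h : Fin (t + 1) ↪o Fin n) :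
    lap v (succE h) = succL R t n (lap (fun j => v j.succ) h) := by
  rw [lap, lap, map_sum]
  refine Finset.sum_congr rfl fun j _ => ?_
  rw [succL_single, delE_succE, succE_apply]

lemma decomp {t n : ℕ} (a : Fr R (t + 1) (n + 1)) :
    ∃ a' e, a = consL R t n a' + succL R (t + 1) n e := by
  induction a using Finsupp.induction_linear with
  | zero => exact ⟨0, 0, by simp⟩
  | add a b ha hb =>
    obtain ⟨a1, e1, rfl⟩ := ha
    obtain ⟨a2, e2, rfl⟩ := hb
    exact ⟨a1 + a2, e1 + e2, by rw [map_add, map_add]; abel⟩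
  | single g r =>
    obtain ⟨h, rfl⟩ | ⟨h, rfl⟩ := cons_or_succ g
    · exact ⟨Finsupp.single h r, 0, by simp⟩
    · exact ⟨0, Finsupp.single h r, by simp⟩

section step
variable {t n : ℕ} (A : Matrix (Fin (t + 1)) (Fin (n + 1)) R)

lemma ev_consL (h0 : ∀ i : Fin t, A i.succ 0 = 0) (a) :
    ev A (consL R t n a) = A 0 0 * ev (A.submatrix Fin.succ Fin.succ) a := by
  induction a using Finsupp.induction_linear with
  | zero => simp
  | add a b ha hb => simp [ha, hb, mul_add]
  | single g r =>
    rw [consL_single, ev_single, ev_single, Matrix.det_succ_column_zero, Fin.sum_univ_succ]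
    rw [Finset.sum_eq_zero]
    · have : ((A.submatrix id (consE g)).submatrix (Fin.succAbove 0) Fin.succ) =
        ((A.submatrix Fin.succ Fin.succ).submatrix id g) := by
        ext i j; simp
      rw [this]
      simp
      ring
    · intro i _
      simp [h0]

lemma ev_succL (a) :
    ev A (succL R (t + 1) n a) = ev (A.submatrix id Fin.succ) a := by
  induction a using Finsupp.induction_linear with
  | zero => simp
  | add a b ha hb => simp [ha, hb]
  | single g r =>
    rw [succL_single, ev_single, ev_single]
    rfl

lemma ev_lapL (a) :
    ev (A.submatrix Fin.succ Fin.succ) (lapL (fun j => A 0 j.succ) a) =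
      ev (A.submatrix id Fin.succ) a := by
  induction a using Finsupp.induction_linear with
  | zero => simp
  | add a b ha hb => simp [ha, hb]
  | single g r =>
    rw [lapL, Finsupp.linearCombination_single, map_smul, ev_lap, ev_single, smul_eq_mul]
    congr 2
    ext i j
    induction i using Fin.cases with
    | zero => rfl
    | succ i => rfl

lemma consL_EN (h0 : ∀ i : Fin t, A i.succ 0 = 0) {y}
    (hy : y ∈ EN (A.submatrix Fin.succ Fin.succ)) : consL R t n y ∈ EN A := by
  have : EN (A.submatrix Fin.succ Fin.succ) ≤ (EN A).comap (consL R t n) := by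
    conv_lhs => rw [EN]
    rw [Submodule.span_le]
    rintro y ⟨s, i, rfl⟩
    have h1 := lap_consE (A i.succ) s
    rw [h0, Finsupp.single_zero, zero_sub] at h1
    have h2 : lap (A i.succ) (consE s) ∈ EN A := Submodule.subset_span ⟨_, _, rfl⟩
    rw [h1, Submodule.neg_mem_iff] at h2
    exact h2
  exact this hy

lemma succL_EN {y} (hy : y ∈ EN (A.submatrix id Fin.succ)) : succL R (t + 1) n y ∈ EN A := by
  have : EN (A.submatrix id Fin.succ) ≤ (EN A).comap (succL R (t + 1) n) := by
    conv_lhs => rw [EN]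
    rw [Submodule.span_le]
    rintro y ⟨s, i, rfl⟩
    have h1 := lap_succE (A i) s
    have h2 : lap (A i) (succE s) ∈ EN A := Submodule.subset_span ⟨_, _, rfl⟩
    rw [h1] at h2
    exact h2
  exact this hy

lemma row_EN (e) : A 0 0 • succL R (t + 1) n e - consL R t n (lapL (fun j => A 0 j.succ) e)
    ∈ EN A := by
  induction e using Finsupp.induction_linear with
  | zero => simp
  | add a b ha hb =>
    have := Submodule.add_mem _ ha hb
    convert this using 1
    simp only [map_add, smul_add]
    abel
  | single g r =>
    have h2 : r • lap (A 0) (consE g) ∈ EN A :=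
      Submodule.smul_mem _ _ (Submodule.subset_span ⟨_, _, rfl⟩)
    convert h2 using 1
    rw [lap_consE, lapL, Finsupp.linearCombination_single, map_smul, smul_sub, succL_single,
      Finsupp.smul_single, Finsupp.smul_single, smul_eq_mul, smul_eq_mul, mul_comm]

lemma Syz.step [IsDomain R] {x : R} (hx : x ≠ 0) (b : ℕ) (hA : A 0 0 = x ^ b)
    (h0 : ∀ i : Fin t, A i.succ 0 = 0) (h1 : Syz (A.submatrix Fin.succ Fin.succ))
    (h2 : Lft (A.submatrix id Fin.succ) x) : Syz A := by
  intro a ha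
  obtain ⟨a', e, rfl⟩ := decomp a
  rw [map_add, ev_consL A h0, ev_succL, hA] at ha
  obtain ⟨y, hy, e1, rfl⟩ := h2.pow hx b e
    ⟨-(ev (A.submatrix Fin.succ Fin.succ) a'), by linear_combination ha⟩
  rw [map_add, ev_EN _ hy, zero_add, map_smul, smul_eq_mul, ← mul_add] at ha
  have ha := (mul_eq_zero.mp ha).resolve_left (pow_ne_zero _ hx)
  rw [← ev_lapL, ← map_add] at ha
  have h3 := consL_EN A h0 (h1 _ ha)
  have h4 := row_EN A e1
  have h5 := succL_EN A hy
  convert Submodule.add_mem _ (Submodule.add_mem _ h3 h4) h5 using 1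
  rw [hA]
  simp only [map_add, map_smul]
  abel

end step

lemma mem_maximalMinors {t n : ℕ} (A : Matrix (Fin t) (Fin n) R) (f : R) :
    f ∈ maximalMinors A ↔ ∃ a, ev A a = f := by
  constructor
  · intro hf
    have : maximalMinors A ≤ LinearMap.range (ev A) := by
      rw [maximalMinors, Ideal.span, Submodule.span_le]
      rintro d ⟨g, rfl⟩
      have hs : StrictMono (g ∘ Tuple.sort g) :=
        (Tuple.monotone_sort g).strictMono_of_injective
          (g.injective.comp (Tuple.sort g).injective)
      refine ⟨Finsupp.single (OrderEmbedding.ofStrictMono _ hs)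
        ((Equiv.Perm.sign (Tuple.sort g) : ℤ) : R), ?_⟩
      rw [ev_single]
      have h1 := Matrix.det_permute' (Tuple.sort g) (A.submatrix id g)
      rw [Matrix.submatrix_submatrix] at h1
      have h2 : A.submatrix id (OrderEmbedding.ofStrictMono _ hs) =
        A.submatrix (id ∘ id) (g ∘ Tuple.sort g) := rfl
      rw [h2, h1, ← mul_assoc, ← Int.cast_mul, ← Units.val_mul, Int.units_mul_self]
      simp
    exact this hf
  · rintro ⟨a, rfl⟩
    induction a using Finsupp.induction_linear with
    | zero => simp
    | add a b ha hb => rw [map_add]; exact Ideal.add_mem _ ha hb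
    | single g r =>
      rw [ev_single]
      exact Ideal.mul_mem_left _ _ (Ideal.subset_span ⟨g.toEmbedding, rfl⟩)

variable {k : Type*} [Field k]

/-- Set the first variable to zero. -/
noncomputable def proj (k : Type*) [Field k] (c : ℕ) :
    MvPolynomial (Fin (c + 1)) k →+* MvPolynomial (Fin c) k :=
  (MvPolynomial.aeval (Fin.cons 0 X : Fin (c + 1) → MvPolynomial (Fin c) k)).toRingHom

@[simp] lemma proj_zero (c : ℕ) : proj k c (X 0) = 0 := by simp [proj]
@[simp] lemma proj_succ (c : ℕ) (i : Fin c) : proj k c (X i.succ) = X i := by simp [proj]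
@[simp] lemma proj_C (c : ℕ) (r : k) : proj k c (MvPolynomial.C r) = MvPolynomial.C r := by
  simp [proj, MvPolynomial.algebraMap_eq]

lemma proj_rename (c : ℕ) (p : MvPolynomial (Fin c) k) : proj k c (rename Fin.succ p) = p := by
  induction p using MvPolynomial.induction_on with
  | C r => simp
  | add p q hp hq => simp [hp, hq]
  | mul_X p i hp => simp [hp]

lemma proj_surj (c : ℕ) : Function.Surjective (proj k c) := fun p => ⟨_, proj_rename c p⟩

lemma dvd_sub (c : ℕ) (p : MvPolynomial (Fin (c + 1)) k) :
    X 0 ∣ p - rename Fin.succ (proj k c p) := by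
  induction p using MvPolynomial.induction_on with
  | C r => simp
  | add p q hp hq =>
    have := dvd_add hp hq
    convert this using 1
    simp only [map_add]; ring
  | mul_X p i hp =>
    induction i using Fin.cases with
    | zero => simp
    | succ i =>
      have := Dvd.dvd.mul_right hp (X i.succ)
      convert this using 1
      simp; ring

lemma proj_ker (c : ℕ) (p : MvPolynomial (Fin (c + 1)) k) (h : proj k c p = 0) : X 0 ∣ p := by
  have := dvd_sub c p
  rwa [h, map_zero, sub_zero] at this

/-- Band matrices with powers of variables on the diagonals. -/
def Band {c t n : ℕ} (A : Matrix (Fin t) (Fin n) (MvPolynomial (Fin c) k)) : Prop :=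
  ∀ (i : Fin t) (j : Fin n),
    (∀ d : Fin c, j.1 = i.1 + d.1 → ∃ m, 0 < m ∧ A i j = X d ^ m) ∧
    ((j.1 < i.1 ∨ i.1 + c ≤ j.1) → A i j = 0)

lemma Band.sub {c t n : ℕ} {A : Matrix (Fin (t + 1)) (Fin (n + 1)) (MvPolynomial (Fin c) k)}
    (h : Band A) : Band (A.submatrix Fin.succ Fin.succ) := by
  intro i j
  refine ⟨fun d hd => (h i.succ j.succ).1 d ?_, fun hd => (h i.succ j.succ).2 ?_⟩
  · simp; omega
  · simp; omega

lemma Band.red {c t n : ℕ} {A : Matrix (Fin t) (Fin (n + 1)) (MvPolynomial (Fin (c + 1)) k)}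
    (h : Band A) : Band ((A.submatrix id Fin.succ).map (proj k c)) := by
  intro i j
  have h1 := h i j.succ
  constructor
  · intro d hd
    obtain ⟨m, hm, h2⟩ := h1.1 d.succ (by simp; omega)
    exact ⟨m, hm, by simp [h2]⟩
  · intro hd
    by_cases h3 : j.1 + 1 = i.1
    · obtain ⟨m, hm, h2⟩ := h1.1 0 (by simp; omega)
      simp [h2, hm.ne']
    · have h2 := h1.2 (by simp; omega)
      simp [h2]

lemma Band.syz {c : ℕ} : ∀ {t n : ℕ} (_ : n + 1 = t + c)
    {A : Matrix (Fin t) (Fin n) (MvPolynomial (Fin c) k)} (_ : Band A), Syz A := by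
  induction c with
  | zero =>
    intro t n hn A _ a _
    have : IsEmpty (Fin t ↪o Fin n) := ⟨fun g => by
      have := Fintype.card_le_of_embedding g.toEmbedding
      simp at this
      omega⟩
    rw [Subsingleton.elim a 0]
    exact Submodule.zero_mem _
  | succ c ihc =>
    intro t
    induction t with
    | zero =>
      intro n hn A _ a ha
      have hu : ∀ g g' : Fin 0 ↪o Fin n, g = g' := fun g g' => by ext i; exact i.elim0
      have : a = 0 := by
        ext1 g
        have h1 : a = Finsupp.single g (a g) := by
          ext1 g'
          rw [hu g' g]; simp
        rw [h1] at ha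
        simpa using ha
      rw [this]
      exact Submodule.zero_mem _
    | succ t iht =>
      intro n hn A hA
      obtain ⟨n, rfl⟩ : ∃ m, n = m + 1 := ⟨n - 1, by omega⟩
      obtain ⟨b, _, hb⟩ := (hA 0 0).1 0 (by simp)
      refine Syz.step A (X_ne_zero 0) b hb (fun i => (hA i.succ 0).2 (by simp))
        (iht (by omega) hA.sub) ?_
      exact Syz.lft (proj k c) (proj_surj c) (proj_zero c) (proj_ker c)
        (ihc (by omega) hA.red)

theorem aux (c t n t' n' : ℕ) (ht : t = t' + 1) (hn : n = n' + 1) (hc : 1 ≤ c)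
    (htn : n + 1 = t + c)
    (A : Matrix (Fin t) (Fin n) (MvPolynomial (Fin c) k)) (hA : Band A)
    (A'' : Matrix (Fin t') (Fin n') (MvPolynomial (Fin c) k))
    (hA'' : A'' = A.submatrix
      (fun i : Fin t' => (⟨i.1 + 1, by have := i.isLt; omega⟩ : Fin t))
      (fun j : Fin n' => (⟨j.1 + 1, by have := j.isLt; omega⟩ : Fin n)))
    (C : Matrix (Fin t) (Fin n') (MvPolynomial (Fin c) k))
    (hC : C = A.submatrix id
      (fun j : Fin n' => (⟨j.1 + 1, by have := j.isLt; omega⟩ : Fin n)))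
    (b : ℕ) (xb : MvPolynomial (Fin c) k) (hxb : xb = X (⟨0, by omega⟩ : Fin c) ^ b)
    (hb : xb = A ⟨0, by omega⟩ ⟨0, by omega⟩) :
    maximalMinors C ≤ maximalMinors A'' ∧
    (∀ g ∈ maximalMinors A'', ∀ h ∈ maximalMinors C, xb * g + h ∈ maximalMinors A) ∧
    (∀ p ∈ maximalMinors A, ∃ g ∈ maximalMinors A'', ∃ h ∈ maximalMinors C, p = xb * g + h) ∧
    (∀ g, xb * g ∈ maximalMinors C → g ∈ maximalMinors C) := by
  subst ht hn
  obtain ⟨c, rfl⟩ : ∃ d, c = d + 1 := ⟨c - 1, by omega⟩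
  replace hA'' : A'' = A.submatrix Fin.succ Fin.succ := hA''
  replace hC : C = A.submatrix id Fin.succ := hC
  replace hb : xb = A 0 0 := hb
  replace hxb : xb = X 0 ^ b := hxb
  have h0 : ∀ i : Fin t', A i.succ 0 = 0 := fun i => (hA i.succ 0).2 (by simp)
  have hL : Lft C (X 0) := by
    rw [hC]
    exact Syz.lft (proj k c) (proj_surj c) (proj_zero c) (proj_ker c)
        (Band.syz (by omega) hA.red)
  have hL := hL.pow (X_ne_zero 0) b
  rw [← hxb] at hL
  have hx0 : xb ≠ 0 := by rw [hxb]; exact pow_ne_zero _ (X_ne_zero 0)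
  refine ⟨?_, ?_, ?_, ?_⟩
  · intro f
    rw [mem_maximalMinors, mem_maximalMinors]
    rintro ⟨e, rfl⟩
    exact ⟨_, by rw [hA'', hC]; exact ev_lapL A e⟩
  · intro g hg h hh
    rw [mem_maximalMinors] at *
    obtain ⟨a, rfl⟩ := hg
    obtain ⟨e, rfl⟩ := hh
    refine ⟨consL _ _ _ a + succL _ _ _ e, ?_⟩
    rw [map_add, ev_consL A h0, ev_succL, hb, hA'', hC]
  · intro p hp
    rw [mem_maximalMinors] at hp
    obtain ⟨a, rfl⟩ := hp
    obtain ⟨a', e, rfl⟩ := decomp a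
    refine ⟨ev A'' a', (mem_maximalMinors _ _).2 ⟨_, rfl⟩, ev C e,
      (mem_maximalMinors _ _).2 ⟨_, rfl⟩, ?_⟩
    rw [map_add, ev_consL A h0, ev_succL, hb, hA'', hC]
  · intro g hg
    rw [mem_maximalMinors] at *
    obtain ⟨e, he⟩ := hg
    exact hL.colon hx0 he

end ENBand

/-- With `I = I(A)`, `I'' = I(A'')` (first row and column of `A` deleted),
`K = I(C)` (first column of `A` deleted) and `b = u_{1,1}`, one has `K ⊆ I''` and the
sequence `0 → K → I'' × K → I → 0`, with maps `f ↦ (f, -x_1^b f)` and `(g,h) ↦ x_1^b g + h`,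
is exact: the first map is injective, the second is well defined with values in `I` and
surjective onto `I`, and the kernel of the second map is the image of the first. -/
theorem stmt_4 {k : Type*} [Field k] (c t : ℕ) (hc : 1 ≤ c) (ht : 2 ≤ t)
    (u : Fin (t + c - 1) → Fin t → ℕ)
    (hupos : ∀ j i, 0 < u j i)
    (hurow : ∀ (j j' : Fin (t + c - 1)) (i : Fin t), j ≤ j' → u j i ≤ u j' i)
    (hucol : ∀ (j : Fin (t + c - 1)) (i i' : Fin t), i ≤ i' → u j i ≤ u j i')
    (A : Matrix (Fin t) (Fin (t + c - 1)) (MvPolynomial (Fin c) k))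
    (hA : ∀ i j, A i j =
      if h : i.1 ≤ j.1 ∧ j.1 < i.1 + c
      then X (⟨j.1 - i.1, by omega⟩ : Fin c) ^ u j i else 0)
    (A'' : Matrix (Fin (t - 1)) (Fin (t + c - 2)) (MvPolynomial (Fin c) k))
    (hA'' : A'' = A.submatrix
      (fun i : Fin (t - 1) => (⟨i.1 + 1, by have := i.isLt; omega⟩ : Fin t))
      (fun j : Fin (t + c - 2) => (⟨j.1 + 1, by have := j.isLt; omega⟩ : Fin (t + c - 1))))
    (C : Matrix (Fin t) (Fin (t + c - 2)) (MvPolynomial (Fin c) k))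
    (hC : C = A.submatrix id
      (fun j : Fin (t + c - 2) => (⟨j.1 + 1, by have := j.isLt; omega⟩ : Fin (t + c - 1))))
    (I I'' K : Ideal (MvPolynomial (Fin c) k))
    (hI : I = maximalMinors A) (hI'' : I'' = maximalMinors A'') (hK : K = maximalMinors C)
    (xb : MvPolynomial (Fin c) k)
    (hxb : xb = X (⟨0, by omega⟩ : Fin c) ^
      u (⟨0, by omega⟩ : Fin (t + c - 1)) (⟨0, by omega⟩ : Fin t)) :
    K ≤ I'' ∧
    (∀ f ∈ K, ∀ f' ∈ K,
      ((f, -(xb * f)) : MvPolynomial (Fin c) k × MvPolynomial (Fin c) k) =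
        (f', -(xb * f')) → f = f') ∧
    (∀ g ∈ I'', ∀ h ∈ K, xb * g + h ∈ I) ∧
    (∀ p ∈ I, ∃ g ∈ I'', ∃ h ∈ K, p = xb * g + h) ∧
    (∀ g ∈ I'', ∀ h ∈ K,
      (xb * g + h = 0 ↔ ∃ f ∈ K, g = f ∧ h = -(xb * f))) := by
  have hband : ENBand.Band A := by
    intro i j
    constructor
    · intro d hd
      refine ⟨u j i, hupos j i, ?_⟩
      rw [hA, dif_pos ⟨by omega, by have := d.isLt; omega⟩]
      congr 2
      ext
      simp; omega
    · intro h
      rw [hA, dif_neg (by omega)]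
  have hb : xb = A ⟨0, by omega⟩ ⟨0, by omega⟩ := by
    rw [hA, dif_pos ⟨by simp, by simp; omega⟩, hxb]
    simp
  obtain ⟨h1, h2, h3, h4⟩ := ENBand.aux c t (t + c - 1) (t - 1) (t + c - 2) (by omega)
    (by omega) hc (by omega) A hband A'' hA'' C hC _ xb hxb hb
  subst hI hI'' hK
  refine ⟨h1, ?_, h2, h3, ?_⟩
  · intro f _ f' _ h
    exact (Prod.mk.inj h).1
  · intro g _ h hh
    constructor
    · intro he
      have h5 : h = -(xb * g) := by linear_combination he
      refine ⟨g, h4 g ?_, rfl, h5⟩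
      rw [h5] at hh
      exact (Ideal.neg_mem_iff _).1 hh
    · rintro ⟨f, _, rfl, rfl⟩
      ring
end

section
/- The radical of the ideal I(A) of maximal minors of A equals the ideal (x_1, …, x_c) of R generated by all the variables. In particular, the determinantal ideal I(A) has height (codimension) c in R. -/
open MvPolynomial Matrix

/-- The height (codimension) of an ideal: the infimum of the heights of the prime ideals
containing it. -/
noncomputable def idealHeight {S : Type*} [CommRing S] (I : Ideal S) : ℕ∞ :=
  ⨅ p ∈ {p : PrimeSpectrum S | I ≤ p.asIdeal}, Order.height p

theorem span_X_eq_ker (k : Type*) [Field k] (c : ℕ) :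
    Ideal.span (Set.range (X : Fin c → MvPolynomial (Fin c) k)) =
      RingHom.ker (constantCoeff : MvPolynomial (Fin c) k →+* k) := by
  ext p
  rw [← Set.image_univ, mem_ideal_span_X_image, RingHom.mem_ker, constantCoeff_eq]
  constructor
  · intro h
    by_contra h0
    obtain ⟨i, -, hi⟩ := h 0 (mem_support_iff.mpr h0)
    exact hi rfl
  · intro h m hm
    by_contra! hc
    have : m = 0 := by
      ext i
      exact hc i trivial
    subst this
    exact (mem_support_iff.mp hm) h

theorem isMaximal_span_X (k : Type*) [Field k] (c : ℕ) :
    (Ideal.span (Set.range (X : Fin c → MvPolynomial (Fin c) k))).IsMaximal := by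
  rw [span_X_eq_ker]
  exact RingHom.ker_isMaximal_of_surjective _ (fun a => ⟨C a, constantCoeff_C _ a⟩)

noncomputable def killVars (k : Type*) [Field k] (c j : ℕ) :
    MvPolynomial (Fin c) k →ₐ[k] MvPolynomial (Fin c) k :=
  aeval (fun i => if i.1 < j then 0 else X i)

noncomputable def killPrime (k : Type*) [Field k] (c j : ℕ) :
    PrimeSpectrum (MvPolynomial (Fin c) k) :=
  ⟨RingHom.ker (killVars k c j), RingHom.ker_isPrime _⟩

theorem killPrime_lt (k : Type*) [Field k] (c j : ℕ) (hj : j < c) :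
    killPrime k c j < killPrime k c (j + 1) := by
  have hcomp : (killVars k c (j + 1)).comp (killVars k c j) = killVars k c (j + 1) := by
    apply MvPolynomial.algHom_ext
    intro i
    simp only [killVars, AlgHom.comp_apply, aeval_X]
    split_ifs with h1 h2 h2
    · simp
    · omega
    · rw [aeval_X, if_pos h2]
    · rw [aeval_X, if_neg h2]
  rw [← PrimeSpectrum.asIdeal_lt_asIdeal]
  refine lt_of_le_of_ne ?_ ?_
  · intro p hp
    have hp' : killVars k c j p = 0 := hp
    change killVars k c (j + 1) p = 0
    rw [← hcomp, AlgHom.comp_apply, hp', map_zero]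
  · intro h
    have h1 : (X (⟨j, hj⟩ : Fin c) : MvPolynomial (Fin c) k) ∈ (killPrime k c (j + 1)).asIdeal := by
      change killVars k c (j + 1) _ = 0
      simp [killVars]
    rw [← h] at h1
    have h2 : killVars k c j (X (⟨j, hj⟩ : Fin c)) = 0 := h1
    simp [killVars] at h2

theorem le_height_killPrime (k : Type*) [Field k] (c j : ℕ) (hj : j ≤ c) :
    (j : ℕ∞) ≤ Order.height (killPrime k c j) := by
  induction j with
  | zero => simp
  | succ j ih =>
    push_cast
    exact (add_le_add_left (ih (by omega)) 1).trans
      (Order.height_add_one_le (killPrime_lt k c j (by omega)))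

theorem height_eq (k : Type*) [Field k] (c : ℕ) (P : PrimeSpectrum (MvPolynomial (Fin c) k))
    (hP : P.asIdeal = Ideal.span (Set.range (X : Fin c → MvPolynomial (Fin c) k))) :
    Order.height P = c := by
  apply le_antisymm
  · have h := Ideal.height_le_card_of_mem_minimalPrimes_span (p := P.asIdeal)
      (Set.finite_range (X : Fin c → MvPolynomial (Fin c) k)) (by
        rw [← hP, Ideal.minimalPrimes_eq_subsingleton_self]; rfl)
    rw [← PrimeSpectrum.height_eq_orderHeight]
    refine h.trans ?_
    rw [← Set.image_univ]
    have := Set.ncard_image_le (f := (X : Fin c → MvPolynomial (Fin c) k)) (Set.finite_univ)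
    rw [Set.ncard_univ, Nat.card_fin] at this
    exact_mod_cast this
  · have : P = killPrime k c c := by
      ext1
      rw [hP]
      refine (isMaximal_span_X k c).eq_of_le (killPrime k c c).2.ne_top ?_
      rw [Ideal.span_le]
      rintro _ ⟨i, rfl⟩
      change killVars k c c _ = 0
      simp [killVars]
    rw [this]
    exact le_height_killPrime k c c le_rfl

theorem X_mem_of_minors_le {k : Type*} [Field k] (c t : ℕ)
    (u : Fin (t + c - 1) → Fin t → ℕ)
    (A : Matrix (Fin t) (Fin (t + c - 1)) (MvPolynomial (Fin c) k))
    (hupos : ∀ j i, 0 < u j i)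
    (hA : ∀ i j, i.1 ≤ j.1 ∧ j.1 < i.1 + c → ∀ h' : j.1 - i.1 < c,
      A i j = X (⟨j.1 - i.1, h'⟩ : Fin c) ^ u j i)
    (hA0 : ∀ i j, ¬ (i.1 ≤ j.1 ∧ j.1 < i.1 + c) → A i j = 0)
    (P : Ideal (MvPolynomial (Fin c) k)) [P.IsPrime] (hP : maximalMinors A ≤ P) :
    ∀ (l : ℕ) (hl : l < c), (X (⟨l, hl⟩ : Fin c) : MvPolynomial (Fin c) k) ∈ P := by
  intro l
  induction l using Nat.strong_induction_on with
  | _ l ih =>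
  intro hl
  let g : Fin t ↪ Fin (t + c - 1) :=
    ⟨fun i => ⟨i.1 + l, by omega⟩, fun a b hab => by
      simp only [Fin.mk.injEq] at hab
      ext; omega⟩
  have hdet : (A.submatrix id g).det ∈ P := hP (Ideal.subset_span ⟨g, rfl⟩)
  have hup : ((Ideal.Quotient.mk P).mapMatrix (A.submatrix id g)).IsUpperTriangular := by
    intro i j hij
    have hij' : j.1 < i.1 := hij
    simp only [RingHom.mapMatrix_apply, Matrix.map_apply, Matrix.submatrix_apply, id]
    rw [Ideal.Quotient.eq_zero_iff_mem]
    by_cases h : i.1 ≤ (g j).1 ∧ (g j).1 < i.1 + c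
    · rw [hA _ _ h (by omega)]
      refine Ideal.pow_mem_of_mem _ (ih _ ?_ _) _ (hupos _ _)
      have h1 : i.1 ≤ j.1 + l := h.1
      change j.1 + l - i.1 < l
      omega
    · rw [hA0 _ _ h]
      exact P.zero_mem
  rw [← Ideal.Quotient.eq_zero_iff_mem, RingHom.map_det, Matrix.det_of_isUpperTriangular hup,
    Finset.prod_eq_zero_iff] at hdet
  obtain ⟨i, -, hi⟩ := hdet
  simp only [RingHom.mapMatrix_apply, Matrix.map_apply, Matrix.submatrix_apply, id] at hi
  rw [Ideal.Quotient.eq_zero_iff_mem] at hi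
  have hg : (g i).1 = i.1 + l := rfl
  rw [hA _ _ ⟨by omega, by omega⟩ (by omega)] at hi
  have := Ideal.IsPrime.mem_of_pow_mem inferInstance _ hi
  convert this using 3
  omega

/-- The radical of the determinantal ideal `I(A)` is the ideal `(x_1, …, x_c)` generated by
all the variables; in particular `I(A)` has height (codimension) `c`. -/
theorem stmt_5 {k : Type*} [Field k] (c t : ℕ) (hc : 1 ≤ c) (ht : 1 ≤ t)
    (u : Fin (t + c - 1) → Fin t → ℕ)
    (hupos : ∀ j i, 0 < u j i)
    (hurow : ∀ (j j' : Fin (t + c - 1)) (i : Fin t), j ≤ j' → u j i ≤ u j' i)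
    (hucol : ∀ (j : Fin (t + c - 1)) (i i' : Fin t), i ≤ i' → u j i ≤ u j i')
    (A : Matrix (Fin t) (Fin (t + c - 1)) (MvPolynomial (Fin c) k))
    (hA : ∀ i j, A i j =
      if h : i.1 ≤ j.1 ∧ j.1 < i.1 + c
      then X (⟨j.1 - i.1, by omega⟩ : Fin c) ^ u j i else 0) :
    (maximalMinors A).radical =
      Ideal.span (Set.range (X : Fin c → MvPolynomial (Fin c) k)) ∧
    idealHeight (maximalMinors A) = (c : ℕ∞) := by
  have hle : maximalMinors A ≤ Ideal.span (Set.range (X : Fin c → MvPolynomial (Fin c) k)) := by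
    rw [maximalMinors, Ideal.span_le]
    rintro _ ⟨g, rfl⟩
    rw [span_X_eq_ker, SetLike.mem_coe, RingHom.mem_ker, RingHom.map_det]
    have hz : constantCoeff.mapMatrix (A.submatrix id g) = 0 := by
      ext i j
      simp only [RingHom.mapMatrix_apply, Matrix.map_apply, Matrix.submatrix_apply, id, hA]
      split_ifs with h
      · rw [map_pow, constantCoeff_X, zero_pow (hupos _ _).ne']
        rfl
      · simp
    rw [hz]
    have : Nonempty (Fin t) := ⟨⟨0, by omega⟩⟩
    exact Matrix.det_zero
  have hge : ∀ P : Ideal (MvPolynomial (Fin c) k), P.IsPrime → maximalMinors A ≤ P →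
      Ideal.span (Set.range (X : Fin c → MvPolynomial (Fin c) k)) ≤ P := by
    intro P hPp hP
    rw [Ideal.span_le]
    rintro _ ⟨i, rfl⟩
    exact X_mem_of_minors_le c t u A hupos
      (fun i j h _ => (hA i j).trans (dif_pos h)) (fun i j h => (hA i j).trans (dif_neg h))
      P hP i.1 i.2
  have hmax := isMaximal_span_X k c
  constructor
  · apply le_antisymm
    · exact hmax.isPrime.radical_le_iff.mpr hle
    · rw [Ideal.radical_eq_sInf]
      exact le_sInf fun P hP => hge P hP.2 hP.1
  · apply le_antisymm
    · rw [← height_eq k c ⟨_, hmax.isPrime⟩ rfl]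
      exact iInf₂_le (⟨_, hmax.isPrime⟩ : PrimeSpectrum (MvPolynomial (Fin c) k)) hle
    · refine le_iInf₂ fun P hP => ?_
      rw [height_eq k c P (hmax.eq_of_le P.2.ne_top (hge _ P.2 hP)).symm]
end

section
/- For every r with 0 ≤ r ≤ c−1, the determinant of the t×t submatrix of A consisting of columns r+1, r+2, …, r+t is congruent to x_{r+1}^{N_r} modulo the ideal (x_1, …, x_r) of R, where N_r = Σ_{i=1}^{t} u_{r+i,i} (for r = 0 this congruence is an equality: the determinant of the submatrix on the first t columns equals x_1^{N_0}). -/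
open MvPolynomial Matrix

/-- For `0 ≤ r ≤ c-1`, the determinant of the `t × t` submatrix of `A` on columns
`r+1, …, r+t` is congruent to `x_{r+1}^{N_r}` modulo the ideal `(x_1, …, x_r)`, where
`N_r = Σ_{i=1}^t u_{r+i,i}`; for `r = 0` the congruence is an equality. -/
theorem stmt_6 {k : Type*} [Field k] (c t : ℕ) (hc : 1 ≤ c) (ht : 1 ≤ t)
    (u : Fin (t + c - 1) → Fin t → ℕ)
    (hupos : ∀ j i, 0 < u j i)
    (hurow : ∀ (j j' : Fin (t + c - 1)) (i : Fin t), j ≤ j' → u j i ≤ u j' i)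
    (hucol : ∀ (j : Fin (t + c - 1)) (i i' : Fin t), i ≤ i' → u j i ≤ u j i')
    (A : Matrix (Fin t) (Fin (t + c - 1)) (MvPolynomial (Fin c) k))
    (hA : ∀ i j, A i j =
      if h : i.1 ≤ j.1 ∧ j.1 < i.1 + c
      then X (⟨j.1 - i.1, by omega⟩ : Fin c) ^ u j i else 0)
    (r : ℕ) (hr : r ≤ c - 1) :
    (A.submatrix id
        (fun j : Fin t => (⟨r + j.1, by have := j.isLt; omega⟩ : Fin (t + c - 1)))).det -
      X (⟨r, by omega⟩ : Fin c) ^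
        (∑ i : Fin t, u (⟨r + i.1, by have := i.isLt; omega⟩ : Fin (t + c - 1)) i) ∈
      Ideal.span ((X : Fin c → MvPolynomial (Fin c) k) '' {j : Fin c | j.1 < r}) ∧
    (r = 0 →
      (A.submatrix id
          (fun j : Fin t => (⟨r + j.1, by have := j.isLt; omega⟩ : Fin (t + c - 1)))).det =
        X (⟨r, by omega⟩ : Fin c) ^
          (∑ i : Fin t, u (⟨r + i.1, by have := i.isLt; omega⟩ : Fin (t + c - 1)) i)) := by
  have key : (A.submatrix id
        (fun j : Fin t => (⟨r + j.1, by have := j.isLt; omega⟩ : Fin (t + c - 1)))).det -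
      X (⟨r, by omega⟩ : Fin c) ^
        (∑ i : Fin t, u (⟨r + i.1, by have := i.isLt; omega⟩ : Fin (t + c - 1)) i) ∈
      Ideal.span ((X : Fin c → MvPolynomial (Fin c) k) '' {j : Fin c | j.1 < r}) := by
    rw [← Ideal.Quotient.mk_eq_mk_iff_sub_mem, RingHom.map_det, Matrix.det_of_isUpperTriangular]
    · rw [← Finset.prod_pow_eq_pow_sum, map_prod]
      refine Finset.prod_congr rfl fun i _ => ?_
      simp only [RingHom.mapMatrix_apply, Matrix.map_apply, Matrix.submatrix_apply, id]
      rw [hA, dif_pos ⟨by simp, by simp only; omega⟩]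
      simp
    · intro i j hij
      have hij' : j.1 < i.1 := hij
      simp only [RingHom.mapMatrix_apply, Matrix.map_apply, Matrix.submatrix_apply, id]
      rw [hA]
      split_ifs with h
      · rw [Ideal.Quotient.eq_zero_iff_mem]
        refine Ideal.pow_mem_of_mem _ (Ideal.subset_span (Set.mem_image_of_mem _ ?_)) _ (hupos _ _)
        simp only [Set.mem_setOf_eq] at h ⊢
        omega
      · exact map_zero _
  refine ⟨key, ?_⟩
  rintro rfl
  simpa [sub_eq_zero] using key
end

section
/- Let c ≥ 1 and let m_1,…,m_c, m'_1,…,m'_c, u_1,…,u_c be nonnegative real numbers such that m_i = m'_i + u_i for all 1 ≤ i ≤ c, u_i ≤ u_c for all 1 ≤ i ≤ c, and m_i ≥ m'_{i+1} for all 1 ≤ i ≤ c−1. Then ∏_{i=1}^{c} m_i ≤ ∏_{i=1}^{c} m'_i + c · u_c · ∏_{i=1}^{c−1} m_i. -/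
/-- If `m_i = m'_i + u_i` with everything nonnegative, `u_i ≤ u_c` for `1 ≤ i ≤ c`, and
`m_i ≥ m'_{i+1}` for `1 ≤ i ≤ c-1`, then
`∏_{i=1}^c m_i ≤ ∏_{i=1}^c m'_i + c · u_c · ∏_{i=1}^{c-1} m_i` (empty products are `1`). -/
theorem stmt_10 (c : ℕ) (hc : 1 ≤ c) (m m' u : ℕ → ℝ)
    (hm : ∀ i, 1 ≤ i → i ≤ c → 0 ≤ m i)
    (hm' : ∀ i, 1 ≤ i → i ≤ c → 0 ≤ m' i)
    (hu : ∀ i, 1 ≤ i → i ≤ c → 0 ≤ u i)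
    (hsum : ∀ i, 1 ≤ i → i ≤ c → m i = m' i + u i)
    (huc : ∀ i, 1 ≤ i → i ≤ c → u i ≤ u c)
    (hdom : ∀ i, 1 ≤ i → i ≤ c - 1 → m i ≥ m' (i + 1)) :
    ∏ i ∈ Finset.Icc 1 c, m i ≤
      (∏ i ∈ Finset.Icc 1 c, m' i) + c * u c * ∏ i ∈ Finset.Icc 1 (c - 1), m i := by
  have hU : 0 ≤ u c := hu c hc le_rfl
  have key : ∀ n : ℕ, n + 1 ≤ c → ∏ i ∈ Finset.Icc 1 (n + 1), m i ≤
      (∏ i ∈ Finset.Icc 1 (n + 1), m' i)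
        + ((n : ℝ) + 1) * u c * ∏ i ∈ Finset.Icc 1 n, m i := by
    intro n
    induction n with
    | zero =>
      intro h
      have h1 := hsum 1 le_rfl h
      have h2 := huc 1 le_rfl h
      simp
      linarith
    | succ n ih =>
      intro h
      have ih := ih (by omega)
      rw [Finset.prod_Icc_succ_top (by omega : 1 ≤ n + 1 + 1) m,
        Finset.prod_Icc_succ_top (by omega : 1 ≤ n + 1 + 1) m', hsum (n + 1 + 1) (by omega) h]
      have hP : 0 ≤ ∏ i ∈ Finset.Icc 1 n, m i := Finset.prod_nonneg (fun i hi => by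
        rw [Finset.mem_Icc] at hi
        exact hm i hi.1 (by omega))
      have hQ : 0 ≤ ∏ i ∈ Finset.Icc 1 (n + 1), m i := Finset.prod_nonneg (fun i hi => by
        rw [Finset.mem_Icc] at hi
        exact hm i hi.1 (by omega))
      have hQe := Finset.prod_Icc_succ_top (by omega : 1 ≤ n + 1) m
      have h1 := mul_le_mul_of_nonneg_right ih (hm' (n + 1 + 1) (by omega) h)
      have h2 := mul_le_mul_of_nonneg_left (huc (n + 1 + 1) (by omega) h) hQ
      have hcoef : 0 ≤ ((n : ℝ) + 1) * u c * ∏ i ∈ Finset.Icc 1 n, m i := by positivity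
      have h3 := mul_le_mul_of_nonneg_left (hdom (n + 1) (by omega) (by omega)) hcoef
      have h4 : ((n : ℝ) + 1) * u c * (∏ i ∈ Finset.Icc 1 n, m i) * m (n + 1)
          = ((n : ℝ) + 1) * u c * ∏ i ∈ Finset.Icc 1 (n + 1), m i := by
        rw [hQe]; ring
      push_cast
      linarith
  obtain ⟨n, rfl⟩ : ∃ n, c = n + 1 := ⟨c - 1, by omega⟩
  have := key n le_rfl
  simpa using this
end

section
/- Let c ≥ 1 and let M_1,…,M_c, M''_1,…,M''_c, v_1,…,v_c be nonnegative real numbers such that M_i = M''_i + v_i for all 1 ≤ i ≤ c, v_c ≤ v_i for all 1 ≤ i ≤ c, and M_i ≤ M''_{i+1} for all 1 ≤ i ≤ c−1. Then ∏_{i=1}^{c} M_i ≥ ∏_{i=1}^{c} M''_i + c · v_c · ∏_{i=1}^{c−1} M_i. -/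
/-- If `M_i = M''_i + v_i` with everything nonnegative, `v_c ≤ v_i` for `1 ≤ i ≤ c`, and
`M_i ≤ M''_{i+1}` for `1 ≤ i ≤ c-1`, then
`∏_{i=1}^c M_i ≥ ∏_{i=1}^c M''_i + c · v_c · ∏_{i=1}^{c-1} M_i` (empty products are `1`). -/
theorem stmt_11 (c : ℕ) (hc : 1 ≤ c) (M M'' v : ℕ → ℝ)
    (hM : ∀ i, 1 ≤ i → i ≤ c → 0 ≤ M i)
    (hM'' : ∀ i, 1 ≤ i → i ≤ c → 0 ≤ M'' i)
    (hv : ∀ i, 1 ≤ i → i ≤ c → 0 ≤ v i)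
    (hsum : ∀ i, 1 ≤ i → i ≤ c → M i = M'' i + v i)
    (hvc : ∀ i, 1 ≤ i → i ≤ c → v c ≤ v i)
    (hdom : ∀ i, 1 ≤ i → i ≤ c - 1 → M i ≤ M'' (i + 1)) :
    ∏ i ∈ Finset.Icc 1 c, M i ≥
      (∏ i ∈ Finset.Icc 1 c, M'' i) + c * v c * ∏ i ∈ Finset.Icc 1 (c - 1), M i := by
  have hP : ∀ n, n ≤ c → 0 ≤ ∏ i ∈ Finset.Icc 1 n, M i := by
    intro n hn
    apply Finset.prod_nonneg
    intro i hi
    rw [Finset.mem_Icc] at hi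
    exact hM i hi.1 (hi.2.trans hn)
  have key : ∀ n : ℕ, n + 1 ≤ c → (∏ i ∈ Finset.Icc 1 (n + 1), M'' i)
      + ((n : ℝ) + 1) * v c * ∏ i ∈ Finset.Icc 1 n, M i ≤ ∏ i ∈ Finset.Icc 1 (n + 1), M i := by
    intro n
    induction n with
    | zero =>
      intro h
      have h1 := hsum 1 le_rfl hc
      have h2 := hvc 1 le_rfl hc
      simp
      linarith
    | succ n ih =>
      intro h
      have ih' := ih (by omega)
      have e1 := Finset.prod_Icc_succ_top (show 1 ≤ n + 1 + 1 by omega) M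
      have e2 := Finset.prod_Icc_succ_top (show 1 ≤ n + 1 + 1 by omega) M''
      have e3 := Finset.prod_Icc_succ_top (show 1 ≤ n + 1 by omega) M
      have p0 := hP n (by omega)
      have p1 := hP (n + 1) (by omega)
      have hs := hsum (n + 1 + 1) (by omega) h
      have hw := hvc (n + 1 + 1) (by omega) h
      have hd := hdom (n + 1) (by omega) (by omega)
      have hm := hM'' (n + 1 + 1) (by omega) h
      have hv0 := hv c hc le_rfl
      have a1 := mul_le_mul_of_nonneg_right ih' hm
      have a2 := mul_le_mul_of_nonneg_left hw p1
      have a3 : ((n : ℝ) + 1) * v c * ∏ i ∈ Finset.Icc 1 (n + 1), M i ≤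
          ((n : ℝ) + 1) * v c * ((∏ i ∈ Finset.Icc 1 n, M i) * M'' (n + 1 + 1)) := by
        rw [e3]
        gcongr
      rw [e1, e2, hs]
      push_cast
      linarith
  obtain ⟨n, rfl⟩ : ∃ n, c = n + 1 := ⟨c - 1, by omega⟩
  have := key n le_rfl
  simpa using this
end

section
/- Let c ≥ 1 and let m_1,…,m_c, m'_1,…,m'_c, u_1,…,u_c be nonnegative real numbers such that m_i = m'_i + u_i for all 1 ≤ i ≤ c, u_i ≤ u_c for all 1 ≤ i ≤ c, and m_i ≥ m'_{i+1} for all 1 ≤ i ≤ c−1. Suppose e, e', e_J are real numbers with e = e' + u_c · e_J, c! · e' ≥ ∏_{i=1}^{c} m'_i, and (c−1)! · e_J ≥ ∏_{i=1}^{c−1} m_i. Then c! · e ≥ ∏_{i=1}^{c} m_i. -/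
/-- Inductive step for the lower multiplicity bound: with `m_i = m'_i + u_i` nonnegative,
`u_i ≤ u_c`, `m_i ≥ m'_{i+1}`, and real numbers `e = e' + u_c · e_J` with
`c! · e' ≥ ∏_{i=1}^c m'_i` and `(c-1)! · e_J ≥ ∏_{i=1}^{c-1} m_i`, one gets
`c! · e ≥ ∏_{i=1}^c m_i` (empty products are `1`). -/
theorem stmt_12 (c : ℕ) (hc : 1 ≤ c) (m m' u : ℕ → ℝ)
    (hm : ∀ i, 1 ≤ i → i ≤ c → 0 ≤ m i)
    (hm' : ∀ i, 1 ≤ i → i ≤ c → 0 ≤ m' i)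
    (hu : ∀ i, 1 ≤ i → i ≤ c → 0 ≤ u i)
    (hsum : ∀ i, 1 ≤ i → i ≤ c → m i = m' i + u i)
    (huc : ∀ i, 1 ≤ i → i ≤ c → u i ≤ u c)
    (hdom : ∀ i, 1 ≤ i → i ≤ c - 1 → m i ≥ m' (i + 1))
    (e e' eJ : ℝ)
    (he : e = e' + u c * eJ)
    (he' : (Nat.factorial c : ℝ) * e' ≥ ∏ i ∈ Finset.Icc 1 c, m' i)
    (heJ : (Nat.factorial (c - 1) : ℝ) * eJ ≥ ∏ i ∈ Finset.Icc 1 (c - 1), m i) :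
    (Nat.factorial c : ℝ) * e ≥ ∏ i ∈ Finset.Icc 1 c, m i := by
  obtain ⟨n, rfl⟩ : ∃ n, c = n + 1 := ⟨c - 1, by omega⟩
  simp only [Nat.add_sub_cancel] at hdom heJ
  have hU : 0 ≤ u (n + 1) := hu _ (by omega) le_rfl
  have key : ∀ k, k ≤ n → ∏ i ∈ Finset.Icc 1 (k + 1), m i ≤
      ∏ i ∈ Finset.Icc 1 (k + 1), m' i
        + ((k : ℝ) + 1) * u (n + 1) * ∏ i ∈ Finset.Icc 1 k, m i := by
    intro k
    induction k with
    | zero =>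
      intro _
      have h1 := hsum 1 le_rfl (by omega)
      have h2 := huc 1 le_rfl (by omega)
      simp
      linarith
    | succ k ih =>
      intro hk
      have ih := ih (by omega)
      have hP : 0 ≤ ∏ i ∈ Finset.Icc 1 k, m i := by
        apply Finset.prod_nonneg
        intro i hi
        rw [Finset.mem_Icc] at hi
        exact hm i hi.1 (by omega)
      have hQ : 0 ≤ ∏ i ∈ Finset.Icc 1 (k + 1), m i := by
        apply Finset.prod_nonneg
        intro i hi
        rw [Finset.mem_Icc] at hi
        exact hm i hi.1 (by omega)
      have e1 : ∏ i ∈ Finset.Icc 1 (k + 1), m i = (∏ i ∈ Finset.Icc 1 k, m i) * m (k + 1) :=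
        Finset.prod_Icc_succ_top (by omega) _
      rw [Finset.prod_Icc_succ_top (by omega : 1 ≤ k + 1 + 1) m,
        Finset.prod_Icc_succ_top (by omega : 1 ≤ k + 1 + 1) m',
        hsum (k + 1 + 1) (by omega) (by omega)]
      have a1 := mul_le_mul_of_nonneg_right ih (hm' (k + 1 + 1) (by omega) (by omega))
      have a2 := mul_le_mul_of_nonneg_left (huc (k + 1 + 1) (by omega) (by omega)) hQ
      have a3 := mul_le_mul_of_nonneg_left (hdom (k + 1) (by omega) (by omega))
        (by positivity : 0 ≤ ((k : ℝ) + 1) * u (n + 1) * ∏ i ∈ Finset.Icc 1 k, m i)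
      have a4 : ((k : ℝ) + 1) * u (n + 1) * (∏ i ∈ Finset.Icc 1 k, m i) * m (k + 1)
          = ((k : ℝ) + 1) * u (n + 1) * ∏ i ∈ Finset.Icc 1 (k + 1), m i := by
        rw [e1]; ring
      push_cast
      linarith
  have h := key n le_rfl
  have b := mul_le_mul_of_nonneg_left heJ
    (by positivity : 0 ≤ ((n : ℝ) + 1) * u (n + 1))
  have f : ((n + 1).factorial : ℝ) = ((n : ℝ) + 1) * (n.factorial : ℝ) := by
    rw [Nat.factorial_succ]; push_cast; ring
  have g : ((n + 1).factorial : ℝ) * e = ((n + 1).factorial : ℝ) * e'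
      + ((n : ℝ) + 1) * u (n + 1) * ((n.factorial : ℝ) * eJ) := by
    rw [he, f]; ring
  linarith
end

section
/- Let c ≥ 1 and let M_1,…,M_c, M''_1,…,M''_c, v_1,…,v_c be nonnegative real numbers such that M_i = M''_i + v_i for all 1 ≤ i ≤ c, v_c ≤ v_i for all 1 ≤ i ≤ c, and M_i ≤ M''_{i+1} for all 1 ≤ i ≤ c−1. Suppose e, e'', e_K are real numbers with e = e'' + v_c · e_K, c! · e'' ≤ ∏_{i=1}^{c} M''_i, and (c−1)! · e_K ≤ ∏_{i=1}^{c−1} M_i. Then c! · e ≤ ∏_{i=1}^{c} M_i. -/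
/-- Inductive step for the upper multiplicity bound: with `M_i = M''_i + v_i` nonnegative,
`v_c ≤ v_i`, `M_i ≤ M''_{i+1}`, and real numbers `e = e'' + v_c · e_K` with
`c! · e'' ≤ ∏_{i=1}^c M''_i` and `(c-1)! · e_K ≤ ∏_{i=1}^{c-1} M_i`, one gets
`c! · e ≤ ∏_{i=1}^c M_i` (empty products are `1`). -/
theorem stmt_13 (c : ℕ) (hc : 1 ≤ c) (M M'' v : ℕ → ℝ)
    (hM : ∀ i, 1 ≤ i → i ≤ c → 0 ≤ M i)
    (hM'' : ∀ i, 1 ≤ i → i ≤ c → 0 ≤ M'' i)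
    (hv : ∀ i, 1 ≤ i → i ≤ c → 0 ≤ v i)
    (hsum : ∀ i, 1 ≤ i → i ≤ c → M i = M'' i + v i)
    (hvc : ∀ i, 1 ≤ i → i ≤ c → v c ≤ v i)
    (hdom : ∀ i, 1 ≤ i → i ≤ c - 1 → M i ≤ M'' (i + 1))
    (e e'' eK : ℝ)
    (he : e = e'' + v c * eK)
    (he'' : (Nat.factorial c : ℝ) * e'' ≤ ∏ i ∈ Finset.Icc 1 c, M'' i)
    (heK : (Nat.factorial (c - 1) : ℝ) * eK ≤ ∏ i ∈ Finset.Icc 1 (c - 1), M i) :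
    (Nat.factorial c : ℝ) * e ≤ ∏ i ∈ Finset.Icc 1 c, M i := by
  obtain ⟨n, rfl⟩ : ∃ n, c = n + 1 := ⟨c - 1, by omega⟩
  simp only [Nat.add_sub_cancel] at hdom heK
  have key : ∀ k, k ≤ n → ∏ i ∈ Finset.Icc 1 (k + 1), M'' i
      + ((k : ℝ) + 1) * v (n + 1) * ∏ i ∈ Finset.Icc 1 k, M i
      ≤ ∏ i ∈ Finset.Icc 1 (k + 1), M i := by
    intro k
    induction k with
    | zero =>
      intro _
      have h1 := hsum 1 le_rfl hc
      have h2 := hvc 1 le_rfl hc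
      simp
      linarith
    | succ k ih =>
      intro hk
      have ih := ih (by omega)
      rw [Finset.prod_Icc_succ_top (show 1 ≤ k + 1 + 1 by omega) M'',
        Finset.prod_Icc_succ_top (show 1 ≤ k + 1 + 1 by omega) M]
      have hP : 0 ≤ ∏ i ∈ Finset.Icc 1 k, M i := by
        refine Finset.prod_nonneg fun i hi => ?_
        rw [Finset.mem_Icc] at hi
        exact hM i hi.1 (by omega)
      have hPs : ∏ i ∈ Finset.Icc 1 (k + 1), M i
          = (∏ i ∈ Finset.Icc 1 k, M i) * M (k + 1) :=
        Finset.prod_Icc_succ_top (by omega) M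
      have hP1 : 0 ≤ ∏ i ∈ Finset.Icc 1 (k + 1), M i := by
        rw [hPs]
        exact mul_nonneg hP (hM _ (by omega) (by omega))
      have hw := hv (n + 1) hc le_rfl
      have hm := hM'' (k + 1 + 1) (by omega) (by omega)
      have hd := hdom (k + 1) (by omega) hk
      have hs := hsum (k + 1 + 1) (by omega) (by omega)
      have hvv := hvc (k + 1 + 1) (by omega) (by omega)
      have a1 := mul_le_mul_of_nonneg_right ih hm
      have a2 := mul_le_mul_of_nonneg_left hd
        (show 0 ≤ ((k : ℝ) + 1) * v (n + 1) * ∏ i ∈ Finset.Icc 1 k, M i by positivity)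
      have a3 := mul_le_mul_of_nonneg_left hvv hP1
      have a4 : ((k : ℝ) + 1) * v (n + 1) * (∏ i ∈ Finset.Icc 1 k, M i) * M (k + 1)
          = ((k : ℝ) + 1) * v (n + 1) * ∏ i ∈ Finset.Icc 1 (k + 1), M i := by
        rw [hPs]; ring
      rw [hs]
      push_cast
      linarith
  have hkey := key n le_rfl
  have hw := hv (n + 1) hc le_rfl
  have b := mul_le_mul_of_nonneg_left heK
    (show 0 ≤ ((n : ℝ) + 1) * v (n + 1) by positivity)
  have hf : ((n + 1).factorial : ℝ) = ((n : ℝ) + 1) * (n.factorial : ℝ) := by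
    rw [Nat.factorial_succ]; push_cast; ring
  calc ((n + 1).factorial : ℝ) * e
      = ((n + 1).factorial : ℝ) * e''
        + ((n : ℝ) + 1) * v (n + 1) * ((n.factorial : ℝ) * eK) := by
        rw [he, hf]; ring
    _ ≤ _ := by linarith
end
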